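/- Let A be a σ-unital simple C*-algebra with strict comparison which is not purely infinite. Let a, b ∈ (A⊗K)_+ be such that d_τ(a) < d_τ(b) < ∞ for all τ ∈ QT̃(A)\{0}, and suppose ω(a) = 0. Then there exists x ∈ A⊗K such that x*x = a and xx* ∈ Her(b), i.e., a ≾̃ b. -/

import Mathlib

open scoped ENNReal
open Filter Topology

noncomputable section

namespace Paper

/-! ### Generic definitions in a (non-unital) C*-algebra -/

variable (R : Type*) [NonUnitalCStarAlgebra R] [PartialOrder R] [StarOrderedRing R]

variable {R} in
/-- The hereditary C*-subalgebra generated by `b`, i.e. `closure (b R b)`. -/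
def her (b : R) : Set R := closure {x : R | ∃ y : R, x = b * y * b}

/-- `I` is a (not necessarily closed) two-sided ideal of the subalgebra `B`. -/
def IsIdealIn (B I : Set R) : Prop :=
  I ⊆ B ∧ (0 : R) ∈ I ∧ (∀ x ∈ I, ∀ y ∈ I, x + y ∈ I) ∧ (∀ x ∈ I, -x ∈ I) ∧
    (∀ x ∈ I, ∀ b ∈ B, x * b ∈ I ∧ b * x ∈ I)

variable {R} in
/-- The Pedersen ideal of the subalgebra `B`: the minimal dense two-sided ideal of `B`,
equivalently the intersection of all dense two-sided ideals of `B`. -/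
def pedersenIn (B : Set R) : Set R :=
  ⋂ I ∈ {I : Set R | IsIdealIn R B I ∧ B ⊆ closure I}, I

/-- The Pedersen ideal of `R`. -/
def pedersen : Set R := pedersenIn (Set.univ : Set R)

variable {R} in
/-- Cuntz subequivalence `a ≲ b`. -/
def CuntzLE (a b : R) : Prop :=
  ∃ x : ℕ → R, Tendsto (fun n => ‖a - star (x n) * b * x n‖) atTop (𝓝 0)

variable {R} in
/-- Cuntz subequivalence relative to a subset `B` (the `xₙ` are taken in `B`). -/
def CuntzLEIn (B : Set R) (a b : R) : Prop :=
  ∃ x : ℕ → R, (∀ n, x n ∈ B) ∧ Tendsto (fun n => ‖a - star (x n) * b * x n‖) atTop (𝓝 0)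

variable {R} in
/-- Cuntz equivalence `a ∼ b`. -/
def CuntzEq (a b : R) : Prop := CuntzLE a b ∧ CuntzLE b a

/-- The cut-off function `f_ε`: `0` on `[0, ε/2]`, `1` on `[ε, ∞)`, linear in between. -/
def cutoff (ε : ℝ) : ℝ → ℝ := fun t => min 1 (max 0 (2 * t / ε - 1))

variable {R} in
/-- `f_ε(a)`, via the (non-unital) continuous functional calculus. -/
def fEps (ε : ℝ) (a : R) : R := cfcₙ (cutoff ε) a

/-- A densely defined 2-quasitrace on `R` (recorded by its values on positive elements;
the value on non-positive elements is normalised to `0`). -/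
structure QuasiTrace : Type _ where
  toFun : R → ℝ≥0∞
  zero_of_not_nonneg : ∀ a : R, ¬ (0 ≤ a) → toFun a = 0
  map_zero : toFun 0 = 0
  map_smul : ∀ (r : ℝ) (a : R), 0 < r → 0 ≤ a → toFun (r • a) = ENNReal.ofReal r * toFun a
  map_add_of_commute : ∀ a b : R, 0 ≤ a → 0 ≤ b → a * b = b * a →
    toFun (a + b) = toFun a + toFun b
  map_star_mul_self : ∀ x : R, toFun (star x * x) = toFun (x * star x)
  lowerSemicontinuousOn : LowerSemicontinuousOn toFun {a : R | 0 ≤ a}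
  finite_on_pedersen : ∀ a ∈ pedersen R, 0 ≤ a → toFun a < ∞
  exists_matrix_extension : ∃ σ : Matrix (Fin 2) (Fin 2) R → ℝ≥0∞,
    (∀ a : R, σ (fun i j => if i = 0 ∧ j = 0 then a else 0) = toFun a) ∧
    σ 0 = 0 ∧
    (∀ (r : ℝ) (x : Matrix (Fin 2) (Fin 2) R), 0 < r → (∃ y, x = star y * y) →
      σ (r • x) = ENNReal.ofReal r * σ x) ∧
    (∀ x y : Matrix (Fin 2) (Fin 2) R, (∃ z, x = star z * z) → (∃ z, y = star z * z) →
      x * y = y * x → σ (x + y) = σ x + σ y) ∧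
    (∀ x : Matrix (Fin 2) (Fin 2) R, σ (star x * x) = σ (x * star x))

/-- The topology of pointwise convergence on the Pedersen ideal. -/
instance : TopologicalSpace (QuasiTrace R) :=
  TopologicalSpace.induced (fun τ => fun a : pedersen R => τ.toFun a) inferInstance

variable {R}

/-- The zero quasitrace. -/
def QuasiTrace.IsZero (τ : QuasiTrace R) : Prop := ∀ a : R, τ.toFun a = 0

/-- The dimension function `d_τ(a) = lim_{ε → 0} τ(f_ε(a))`. -/
def dTau (τ : QuasiTrace R) (a : R) : ℝ≥0∞ :=
  ⨆ n : ℕ, τ.toFun (fEps (1 / (n + 1)) a)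

/-- `ω(a)` relative to a set `S` of quasitraces:
`lim_n sup {d_τ(a) - τ(f_{1/n}(a)) : τ ∈ S}`. -/
def omegaOn (S : Set (QuasiTrace R)) (a : R) : ℝ≥0∞ :=
  ⨅ n : ℕ, ⨆ τ ∈ S, (dTau τ a - τ.toFun (fEps (1 / (n + 1)) a))

/-- The seminorm `‖x‖_{2,S}`. -/
def norm2On (S : Set (QuasiTrace R)) (x : R) : ℝ≥0∞ :=
  ⨆ τ ∈ S, (τ.toFun (star x * x)) ^ (1 / 2 : ℝ)

variable (R)

/-- `R` has (Blackadar's) strict comparison. -/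
def StrictComparison : Prop :=
  ∀ a b : R, 0 ≤ a → 0 ≤ b →
    (∀ τ : QuasiTrace R, ¬ τ.IsZero → dTau τ a < dTau τ b) → CuntzLE a b

/-- `R` is a simple C*-algebra: it is nonzero and has no nontrivial closed two-sided ideals. -/
def IsSimpleCStar : Prop :=
  (∃ x : R, x ≠ 0) ∧
    ∀ I : TwoSidedIdeal R, IsClosed (I : Set R) → (I : Set R) = {0} ∨ (I : Set R) = Set.univ

/-- `R` is σ-unital: it contains a strictly positive element `h`
(equivalently, `Her(h) = R`). -/
def SigmaUnital : Prop := ∃ h : R, 0 ≤ h ∧ her h = Set.univ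

/-- `R` is elementary: isomorphic to the algebra of compact operators on some Hilbert space. -/
def IsElementary : Prop :=
  ∃ (H : Type) (_ : NormedAddCommGroup H) (_ : InnerProductSpace ℂ H) (_ : CompleteSpace H)
    (φ : R →⋆ₙₐ[ℂ] (H →L[ℂ] H)), Function.Injective φ ∧
      Set.range φ = {T : H →L[ℂ] H | IsCompactOperator (⇑T)}

/-- `R` is purely infinite: `R ≇ ℂ` and `b ≲ a` for all nonzero positive `a, b`. -/
def PurelyInfinite : Prop :=
  (¬ ∃ φ : R →⋆ₙₐ[ℂ] ℂ, Function.Bijective φ) ∧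
    ∀ a b : R, 0 ≤ a → 0 ≤ b → a ≠ 0 → b ≠ 0 → CuntzLE b a

/-- `R` is finite: its minimal unitization contains no non-unitary isometry. -/
def IsFiniteCStar : Prop :=
  ∀ v : Unitization ℂ R, star v * v = 1 → v * star v = 1

/-- `R` has stable rank one: the invertible elements are dense in the minimal unitization. -/
def StableRankOne : Prop := Dense {x : Unitization ℂ R | IsUnit x}

variable {R}

/-- `c` represents `n·[a]` in the Cuntz semigroup: it is the sum of `n` mutually
orthogonal positive elements, each Cuntz equivalent to `a`. -/
def IsNFoldRep (n : ℕ) (a c : R) : Prop :=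
  ∃ f : Fin n → R, (∀ i, 0 ≤ f i) ∧ (∀ i, CuntzEq (f i) a) ∧
    (∀ i j, i ≠ j → f i * f j = 0) ∧ c = ∑ i, f i

/-- `s` represents the supremum of the increasing sequence of Cuntz classes `[y n]`. -/
def IsCuntzLUB (y : ℕ → R) (s : R) : Prop :=
  (∀ n, CuntzLE (y n) s) ∧ ∀ c : R, 0 ≤ c → (∀ n, CuntzLE (y n) c) → CuntzLE s c

/-- `[x] ≪ [y]` in the Cuntz semigroup. -/
def CuntzWayBelow (x y : R) : Prop :=
  ∀ yseq : ℕ → R, (∀ n, 0 ≤ yseq n) → (∀ n, CuntzLE (yseq n) (yseq (n + 1))) →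
    ∀ s : R, 0 ≤ s → IsCuntzLUB yseq s → CuntzLE y s → ∃ n₀, CuntzLE x (yseq n₀)

variable (R)

/-- The Cuntz semigroup of `R` is almost unperforated. -/
def AlmostUnperforated : Prop :=
  ∀ (a b : R) (k : ℕ), 1 ≤ k → 0 ≤ a → 0 ≤ b →
    (∃ c d : R, IsNFoldRep (k + 1) a c ∧ IsNFoldRep k b d ∧ CuntzLE c d) → CuntzLE a b

/-- The Cuntz semigroup of `R` is almost divisible. -/
def AlmostDivisible : Prop :=
  ∀ x y : R, 0 ≤ x → 0 ≤ y → CuntzWayBelow x y → ∀ n : ℕ, 1 ≤ n →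
    ∃ z : R, 0 ≤ z ∧ (∃ c : R, IsNFoldRep n z c ∧ CuntzLE c y) ∧
      (∃ c : R, IsNFoldRep (n + 1) z c ∧ CuntzLE x c)

/-! ### The stabilization `W ≅ A ⊗ K` -/

variable (A W : Type*) [NonUnitalCStarAlgebra A] [PartialOrder A] [StarOrderedRing A]
  [NonUnitalCStarAlgebra W] [PartialOrder W] [StarOrderedRing W]

/-- A realization of `W` as the stabilization `A ⊗ K`: the maps `emb i j : a ↦ a ⊗ e_{ij}`
are isometric, satisfy the matrix-unit relations, and have dense joint linear span. -/
structure Stabilization : Type _ where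
  emb : ℕ → ℕ → (A →ₗ[ℂ] W)
  emb_mul : ∀ (i j k l : ℕ) (a b : A),
    emb i j a * emb k l b = if j = k then emb i l (a * b) else 0
  emb_star : ∀ (i j : ℕ) (a : A), star (emb i j a) = emb j i (star a)
  norm_emb : ∀ (i j : ℕ) (a : A), ‖emb i j a‖ = ‖a‖
  dense_span : Dense (Submodule.span ℂ {w : W | ∃ (i j : ℕ) (a : A), w = emb i j a} : Set W)

variable {A W}

/-- The set `QT(A)` of quasitraces normalized on `A ⊆ A ⊗ K`. -/
def QTSet (SB : Stabilization A W) : Set (QuasiTrace W) :=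
  {τ | (⨆ a : {a : A // 0 ≤ a ∧ ‖a‖ ≤ 1}, τ.toFun (SB.emb 0 0 a)) = 1}

/-- The quasitraces normalized on the hereditary subalgebra `Her(c) ⊆ W`. -/
def QTSetHer (c : W) : Set (QuasiTrace W) :=
  {τ : QuasiTrace W |
    (⨆ a : {a : W // a ∈ her c ∧ 0 ≤ a ∧ ‖a‖ ≤ 1}, τ.toFun a) = 1}

/-- `ω(a) = 0` for `a ∈ W = A ⊗ K`, computed relative to `\overline{QT(Her(e))}^w`
for any nonzero `e ∈ Ped(A)₊`. -/
def OmegaZero (SB : Stabilization A W) (a : W) : Prop :=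
  ∀ e : A, 0 ≤ e → e ≠ 0 → e ∈ pedersen A →
    omegaOn (closure (QTSetHer (SB.emb 0 0 e))) a = 0

/-- `A` has tracial approximate oscillation zero. -/
def TAOZ (SB : Stabilization A W) : Prop :=
  ∀ e : A, 0 ≤ e → e ≠ 0 → e ∈ pedersen A →
    ∀ a : W, 0 ≤ a → a ∈ pedersen W →
      ∃ b : ℕ → W, (∀ n, 0 ≤ b n) ∧ (∀ n, ‖b n‖ ≤ 1) ∧
        (∀ n, b n ∈ pedersenIn (her a)) ∧
        Tendsto (fun n => omegaOn (closure (QTSetHer (SB.emb 0 0 e))) (b n)) atTop (𝓝 0) ∧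
        Tendsto (fun n => norm2On (closure (QTSetHer (SB.emb 0 0 e))) (a - b n)) atTop (𝓝 0)

/-! ### Affine functions on the quasitrace cone and the map `Γ` -/

variable (W) in
/-- `ρ = t·τ + (1-t)·σ` as quasitraces. -/
def IsCombo (t : ℝ) (τ σ ρ : QuasiTrace W) : Prop :=
  ∀ a : W, 0 ≤ a →
    ρ.toFun a = ENNReal.ofReal t * τ.toFun a + ENNReal.ofReal (1 - t) * σ.toFun a

variable (W) in
/-- `f` is affine on the quasitrace cone. -/
def IsAffineQT (f : QuasiTrace W → ℝ≥0∞) : Prop :=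
  ∀ t : ℝ, 0 ≤ t → t ≤ 1 → ∀ τ σ ρ : QuasiTrace W, IsCombo W t τ σ ρ →
    f ρ = ENNReal.ofReal t * f τ + ENNReal.ofReal (1 - t) * f σ

variable (W) in
/-- Membership in `Aff₊(QT̃(A))`. -/
def MemAffPlus (f : QuasiTrace W → ℝ≥0∞) : Prop :=
  (∀ τ, f τ = 0) ∨
    (Continuous f ∧ IsAffineQT W f ∧ (∀ τ, f τ < ∞) ∧
      (∀ τ : QuasiTrace W, ¬ τ.IsZero → 0 < f τ) ∧
      (∀ τ : QuasiTrace W, τ.IsZero → f τ = 0))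

variable (W) in
/-- Membership in `LAff₊(QT̃(A))`. -/
def MemLAffPlus (f : QuasiTrace W → ℝ≥0∞) : Prop :=
  ∃ g : ℕ → QuasiTrace W → ℝ≥0∞, (∀ n, MemAffPlus W (g n)) ∧
    (∀ n τ, g n τ ≤ g (n + 1) τ) ∧ ∀ τ, f τ = ⨆ n, g n τ

variable (W) in
/-- The canonical map `Γ : Cu(A) → LAff₊(QT̃(A))`, `Γ([a])(τ) = d_τ(a)`, is surjective. -/
def GammaSurjective : Prop :=
  ∀ f : QuasiTrace W → ℝ≥0∞, MemLAffPlus W f →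
    ∃ a : W, 0 ≤ a ∧ ∀ τ : QuasiTrace W, dTau τ a = f τ


section Helpers

set_option linter.unusedSectionVars false

variable {R}

/-! ### Functional calculus helpers -/

theorem c_mul {f g : ℝ → ℝ} (hf : Continuous f) (hf0 : f 0 = 0) (hg : Continuous g)
    (hg0 : g 0 = 0) (a : R) : cfcₙ f a * cfcₙ g a = cfcₙ (fun t => f t * g t) a :=
  (cfcₙ_mul f g a hf.continuousOn hf0 hg.continuousOn hg0).symm

theorem c_add {f g : ℝ → ℝ} (hf : Continuous f) (hf0 : f 0 = 0) (hg : Continuous g)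
    (hg0 : g 0 = 0) (a : R) : cfcₙ f a + cfcₙ g a = cfcₙ (fun t => f t + g t) a :=
  (cfcₙ_add f g a hf.continuousOn hf0 hg.continuousOn hg0).symm

theorem c_sub {f g : ℝ → ℝ} (hf : Continuous f) (hf0 : f 0 = 0) (hg : Continuous g)
    (hg0 : g 0 = 0) (a : R) : cfcₙ f a - cfcₙ g a = cfcₙ (fun t => f t - g t) a :=
  (cfcₙ_sub f g a hf.continuousOn hf0 hg.continuousOn hg0).symm

theorem c_smul {f : ℝ → ℝ} (hf : Continuous f) (hf0 : f 0 = 0) (r : ℝ) (a : R) :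
    r • cfcₙ f a = cfcₙ (fun t => r * f t) a :=
  (cfcₙ_const_mul r f a hf.continuousOn hf0).symm

theorem spec_nonneg {a : R} (ha : 0 ≤ a) {t : ℝ} (ht : t ∈ quasispectrum ℝ a) : 0 ≤ t :=
  quasispectrum_nonneg_of_nonneg a ha t ht

theorem spec_le {a : R} {t : ℝ} (ht : t ∈ quasispectrum ℝ a) (ha : 0 ≤ a) : t ≤ ‖a‖ := by
  have h := norm_apply_le_norm_cfcₙ (id : ℝ → ℝ) a ht (by fun_prop) rfl
    (IsSelfAdjoint.of_nonneg ha)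
  rw [cfcₙ_id ℝ a (IsSelfAdjoint.of_nonneg ha)] at h
  exact (le_abs_self _).trans h

theorem c_congr {f g : ℝ → ℝ} {a : R} (ha : 0 ≤ a) (h : ∀ t, 0 ≤ t → f t = g t) :
    cfcₙ f a = cfcₙ g a :=
  cfcₙ_congr fun t ht => h t (spec_nonneg ha ht)

theorem c_mono {f g : ℝ → ℝ} {a : R} (ha : 0 ≤ a) (hf : Continuous f) (hf0 : f 0 = 0)
    (hg : Continuous g) (hg0 : g 0 = 0) (h : ∀ t, 0 ≤ t → f t ≤ g t) :
    cfcₙ f a ≤ cfcₙ g a :=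
  cfcₙ_mono (fun t ht => h t (spec_nonneg ha ht)) hf.continuousOn hg.continuousOn hf0 hg0

theorem c_nonneg {f : ℝ → ℝ} {a : R} (ha : 0 ≤ a) (h : ∀ t, 0 ≤ t → 0 ≤ f t) :
    0 ≤ cfcₙ f a :=
  cfcₙ_nonneg fun t ht => h t (spec_nonneg ha ht)

theorem c_norm_le {f : ℝ → ℝ} {a : R} (ha : 0 ≤ a) {c : ℝ} (h : ∀ t, 0 ≤ t → |f t| ≤ c) :
    ‖cfcₙ f a‖ ≤ c :=
  norm_cfcₙ_le fun t ht => h t (spec_nonneg ha ht)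

theorem c_sa (f : ℝ → ℝ) (a : R) : IsSelfAdjoint (cfcₙ f a) := cfcₙ_predicate f a

theorem c_star (f : ℝ → ℝ) (a : R) : star (cfcₙ f a) = cfcₙ f a := (c_sa f a).star_eq

theorem c_id {a : R} (ha : 0 ≤ a) : cfcₙ (fun t : ℝ => t) a = a :=
  cfcₙ_id' ℝ a (IsSelfAdjoint.of_nonneg ha)

theorem c_comm (f g : ℝ → ℝ) (a : R) : cfcₙ f a * cfcₙ g a = cfcₙ g a * cfcₙ f a :=
  (cfcₙ_commute_cfcₙ f g a).eq

theorem c_mul_id {f : ℝ → ℝ} (hf : Continuous f) (hf0 : f 0 = 0) {a : R} (ha : 0 ≤ a) :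
    cfcₙ f a * a = cfcₙ (fun t => f t * t) a := by
  conv_lhs => rw [← c_id ha]
  rw [c_id ha]
  conv_lhs => enter [2]; rw [← c_id ha]
  exact c_mul hf hf0 continuous_id rfl a

theorem c_commute {a b : R} (h : a * b = b * a) (f : ℝ → ℝ) :
    cfcₙ f a * b = b * cfcₙ f a :=
  (Commute.cfcₙ_real (show Commute a b from h) f).eq

/-! cutoff facts -/

theorem cutoff_cont (ε : ℝ) : Continuous (cutoff ε) := by
  unfold cutoff; fun_prop

theorem cutoff_zero (ε : ℝ) : cutoff ε 0 = 0 := by simp [cutoff]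

theorem cutoff_nonneg (ε t : ℝ) : 0 ≤ cutoff ε t := by
  simp [cutoff]

theorem cutoff_le_one (ε t : ℝ) : cutoff ε t ≤ 1 := by
  simp [cutoff]

theorem cutoff_eq_one {ε t : ℝ} (hε : 0 < ε) (h : ε ≤ t) : cutoff ε t = 1 := by
  have : 1 ≤ 2 * t / ε - 1 := by
    rw [le_sub_iff_add_le, le_div_iff₀ hε]; linarith
  unfold cutoff
  rw [max_eq_right (by linarith), min_eq_left this]

theorem cutoff_eq_zero {ε t : ℝ} (hε : 0 < ε) (h : t ≤ ε / 2) : cutoff ε t = 0 := by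
  have : 2 * t / ε - 1 ≤ 0 := by
    rw [sub_nonpos, div_le_iff₀ hε]; linarith
  unfold cutoff
  rw [max_eq_left this]; simp

theorem cutoff_anti {ε δ t : ℝ} (hδ : 0 < δ) (h : δ ≤ ε) (ht : 0 ≤ t) :
    cutoff ε t ≤ cutoff δ t := by
  unfold cutoff
  have : 2 * t / ε ≤ 2 * t / δ := by gcongr
  gcongr

theorem cutoff_mul {ε δ t : ℝ} (hδ : 0 < δ) (h : δ ≤ ε / 2) :
    cutoff δ t * cutoff ε t = cutoff ε t := by
  rcases le_total t (ε / 2) with h1 | h1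
  · rw [cutoff_eq_zero (by linarith) h1]; simp
  · rw [cutoff_eq_one hδ (by linarith)]; simp

theorem fEps_nonneg {a : R} (ha : 0 ≤ a) (ε : ℝ) : 0 ≤ fEps ε a :=
  c_nonneg ha fun t _ => cutoff_nonneg ε t

theorem fEps_star (ε : ℝ) (a : R) : star (fEps ε a) = fEps ε a := c_star _ _

theorem fEps_norm {a : R} (ha : 0 ≤ a) (ε : ℝ) : ‖fEps ε a‖ ≤ 1 :=
  c_norm_le ha fun t _ => by
    rw [abs_of_nonneg (cutoff_nonneg ε t)]; exact cutoff_le_one ε t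

theorem fEps_mul {a : R} {ε δ : ℝ} (hδ : 0 < δ) (h : δ ≤ ε / 2) :
    fEps δ a * fEps ε a = fEps ε a := by
  unfold fEps
  rw [c_mul (cutoff_cont _) (cutoff_zero _) (cutoff_cont _) (cutoff_zero _)]
  congr 1; ext t; exact cutoff_mul hδ h

theorem fEps_anti {a : R} (ha : 0 ≤ a) {ε δ : ℝ} (hδ : 0 < δ) (h : δ ≤ ε) :
    fEps ε a ≤ fEps δ a :=
  c_mono ha (cutoff_cont _) (cutoff_zero _) (cutoff_cont _) (cutoff_zero _)
    fun _ ht => cutoff_anti hδ h ht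

/-- conjugation by `1 - u` preserves positivity -/
theorem conj_one_sub {d u : R} (hd : 0 ≤ d) (hu : star u = u) :
    0 ≤ d - u * d - d * u + u * d * u := by
  obtain ⟨k, rfl⟩ := CStarAlgebra.nonneg_iff_eq_star_mul_self.1 hd
  have : star k * k - u * (star k * k) - star k * k * u + u * (star k * k) * u
      = star (k - k * u) * (k - k * u) := by
    simp only [star_sub, star_mul, hu]
    noncomm_ring
  rw [this]; exact star_mul_self_nonneg _

theorem norm_sub_fEps_mul {h w : R} (hh : star h = h) (hw : 0 ≤ w) (hle : h * h ≤ w) {ε : ℝ}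
    (hε : 0 < ε) : ‖h - fEps ε w * h‖ * ‖h - fEps ε w * h‖ ≤ ε := by
  set u := fEps ε w with hu
  have hus : star u = u := fEps_star _ _
  rw [← CStarRing.norm_self_mul_star]
  have e1 : (h - u * h) * star (h - u * h)
      = h * h - u * (h * h) - h * h * u + u * (h * h) * u := by
    simp only [star_sub, star_mul, hus, hh]; noncomm_ring
  have hhh : 0 ≤ h * h := by
    have := star_mul_self_nonneg h; rwa [hh] at this
  have e2 : h * h - u * (h * h) - h * h * u + u * (h * h) * u
      ≤ w - u * w - w * u + u * w * u := by
    have := conj_one_sub (sub_nonneg.2 hle) hus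
    rw [← sub_nonneg]
    convert this using 1
    noncomm_ring
  have hc := cutoff_cont ε
  have e3 : w - u * w - w * u + u * w * u
      = cfcₙ (fun t => t * ((1 - cutoff ε t) * (1 - cutoff ε t))) w := by
    have h1 : u * w = cfcₙ (fun t => cutoff ε t * t) w :=
      c_mul_id hc (cutoff_zero _) hw
    have h2 : w * u = cfcₙ (fun t => cutoff ε t * t) w := by
      rw [← h1, hu, fEps, c_commute rfl]
    have h3 : u * w * u = cfcₙ (fun t => cutoff ε t * t * cutoff ε t) w := by
      rw [h1, hu, fEps, c_mul (by fun_prop) (by simp) hc (cutoff_zero _)]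
    rw [h3, h2, h1]
    conv_lhs => enter [1, 1, 1]; rw [← c_id hw]
    rw [c_sub (by fun_prop) (by simp) (by fun_prop) (by simp),
      c_sub (by fun_prop) (by simp) (by fun_prop) (by simp),
      c_add (by fun_prop) (by simp) (by fun_prop) (by simp)]
    congr 1; ext t; ring
  rw [e1]
  refine (CStarAlgebra.norm_le_norm_of_nonneg_of_le (conj_one_sub hhh hus) e2).trans ?_
  rw [e3]
  refine c_norm_le hw fun t ht => ?_
  have h1 := cutoff_nonneg ε t
  have h2 := cutoff_le_one ε t
  rw [abs_of_nonneg (by nlinarith [mul_self_nonneg (1 - cutoff ε t)])]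
  rcases le_total ε t with h | h
  · rw [cutoff_eq_one hε h]; simp; exact hε.le
  · calc t * ((1 - cutoff ε t) * (1 - cutoff ε t)) ≤ t * (1 * 1) := by
          gcongr <;> linarith
      _ ≤ ε := by linarith

/-- `cutoff ε t / √t`, made continuous. -/
def psi (ε : ℝ) : ℝ → ℝ := fun t => cutoff ε t / √(max t (ε / 2))

theorem psi_cont {ε : ℝ} (hε : 0 < ε) : Continuous (psi ε) := by
  unfold psi
  refine (cutoff_cont ε).div (by fun_prop) fun t => ?_
  have : 0 < max t (ε / 2) := lt_max_of_lt_right (by linarith)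
  positivity

theorem psi_zero (ε : ℝ) : psi ε 0 = 0 := by simp [psi, cutoff_zero]

theorem psi_sq {ε δ t : ℝ} (hε : 0 < ε) (hδ : 0 < δ) (ht : 0 ≤ t) :
    psi ε t * t * psi δ t = cutoff ε t * cutoff δ t := by
  rcases le_total t (ε / 2) with h | h
  · simp [psi, cutoff_eq_zero hε h]
  rcases le_total t (δ / 2) with h' | h'
  · simp [psi, cutoff_eq_zero hδ h']
  unfold psi
  rw [max_eq_left h, max_eq_left h']
  have : 0 < √t := Real.sqrt_pos.2 (by linarith)
  have h2 : t = √t * √t := (Real.mul_self_sqrt ht).symm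
  field_simp
  rw [Real.sq_sqrt ht]

/-- Factorisation: if `h² ≤ z*z` then `h² = Y*Y` with `Y` in the closure of `zR`. -/
theorem exists_factor {h z : R} (hh : star h = h) (hle : h * h ≤ star z * z) :
    ∃ Y : R, Y ∈ closure {y : R | ∃ r, y = z * r} ∧ star Y * Y = h * h := by
  set w := star z * z with hwdef
  have hw : 0 ≤ w := star_mul_self_nonneg z
  let ep : ℕ → ℝ := fun n => 1 / (n + 1)
  have hep : ∀ n, 0 < ep n := fun n => by positivity
  have hepl : Tendsto ep atTop (𝓝 0) := tendsto_one_div_add_atTop_nhds_zero_nat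
  let Y : ℕ → R := fun n => z * (cfcₙ (psi (ep n)) w * h)
  have hYY : ∀ n m, star (Y n) * Y m = h * (fEps (ep n) w * fEps (ep m) w) * h := by
    intro n m
    have e : cfcₙ (psi (ep n)) w * w * cfcₙ (psi (ep m)) w = fEps (ep n) w * fEps (ep m) w := by
      rw [c_mul_id (psi_cont (hep n)) (psi_zero _) hw,
        c_mul (f := fun t => psi (ep n) t * t) (by have := psi_cont (hep n); fun_prop) (by simp)
          (psi_cont (hep m)) (psi_zero _),
        fEps, fEps, c_mul (cutoff_cont _) (cutoff_zero _) (cutoff_cont _) (cutoff_zero _)]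
      exact c_congr hw fun t ht => psi_sq (hep n) (hep m) ht
    rw [← e]
    simp only [Y, star_mul, c_star, hh, hwdef]
    noncomm_ring
  have hdiff : ∀ n m, n ≤ m → ‖Y n - Y m‖ ≤ √(ep n) := by
    intro n m hnm
    apply Real.le_sqrt_of_sq_le
    have hmn : ep m ≤ ep n := one_div_le_one_div_of_le (by positivity) (by gcongr)
    set κ := fEps (ep n) w - fEps (ep m) w with hκ
    have hκs : star κ = κ := by simp [hκ, fEps_star]
    have e1 : star (Y n - Y m) * (Y n - Y m) = star (κ * h) * (κ * h) := by
      have : star (Y n - Y m) * (Y n - Y m) =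
        star (Y n) * Y n - star (Y n) * Y m - star (Y m) * Y n + star (Y m) * Y m := by
        simp only [star_sub]; noncomm_ring
      rw [this]
      simp only [hYY, star_mul, hκs, hh]
      rw [hκ]; noncomm_ring
    rw [sq, ← CStarRing.norm_star_mul_self, e1, CStarRing.norm_star_mul_self,
      ← CStarRing.norm_self_mul_star]
    have hhh : 0 ≤ h * h := by
      have := star_mul_self_nonneg h; rwa [hh] at this
    have e2 : κ * h * star (κ * h) = κ * (h * h) * star κ := by
      simp only [star_mul, hκs, hh]; noncomm_ring
    rw [e2]
    refine (CStarAlgebra.norm_le_norm_of_nonneg_of_le (star_right_conjugate_nonneg hhh _)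
      (star_right_conjugate_le_conjugate hle κ)).trans ?_
    rw [hκs]
    have e3 : κ = cfcₙ (fun t => cutoff (ep n) t - cutoff (ep m) t) w := by
      rw [hκ, fEps, fEps, c_sub (cutoff_cont _) (cutoff_zero _) (cutoff_cont _) (cutoff_zero _)]
    have hc := cutoff_cont (ep n)
    have hc' := cutoff_cont (ep m)
    rw [e3, c_mul_id (by fun_prop) (by simp [cutoff_zero]) hw,
      c_mul (by fun_prop) (by simp) (by fun_prop) (by simp [cutoff_zero])]
    refine c_norm_le hw fun t ht => ?_
    have h1 := cutoff_nonneg (ep n) t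
    have h2 := cutoff_le_one (ep m) t
    have h3 := cutoff_anti (hep m) hmn ht
    rw [abs_of_nonneg (by nlinarith [mul_self_nonneg (cutoff (ep n) t - cutoff (ep m) t)])]
    rcases le_total (ep n) t with h | h
    · rw [cutoff_eq_one (hep n) h, cutoff_eq_one (hep m) (by linarith)]; simp; exact (hep n).le
    · have h5 : (cutoff (ep m) t - cutoff (ep n) t) * (cutoff (ep m) t - cutoff (ep n) t) ≤ 1 := by
        nlinarith
      nlinarith
  have hsq : Tendsto (fun n => √(ep n)) atTop (𝓝 0) := by
    have : Tendsto (fun n => √(ep n)) atTop (𝓝 (√0)) :=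
      (Real.continuous_sqrt.tendsto 0).comp hepl
    rw [Real.sqrt_zero] at this; exact this
  have hC : CauchySeq Y := by
    refine cauchySeq_of_le_tendsto_0' (fun n => √(ep n)) (fun n m hnm => ?_) hsq
    rw [dist_eq_norm]; exact hdiff n m hnm
  obtain ⟨Y0, hY0⟩ := cauchySeq_tendsto_of_complete hC
  refine ⟨Y0, ?_, ?_⟩
  · exact mem_closure_of_tendsto hY0 (Eventually.of_forall fun n => ⟨_, rfl⟩)
  · have l1 : Tendsto (fun n => star (Y n) * Y n) atTop (𝓝 (star Y0 * Y0)) :=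
      hY0.star.mul hY0
    have l2 : Tendsto (fun n => fEps (ep n) w * h) atTop (𝓝 h) := by
      rw [tendsto_iff_norm_sub_tendsto_zero]
      refine squeeze_zero (fun n => norm_nonneg _) (fun n => ?_) hsq
      rw [norm_sub_rev]
      apply Real.le_sqrt_of_sq_le
      rw [sq]
      exact norm_sub_fEps_mul hh hw hle (hep n)
    have l3 : Tendsto (fun n => star (fEps (ep n) w * h) * (fEps (ep n) w * h)) atTop
        (𝓝 (star h * h)) := l2.star.mul l2
    rw [hh] at l3
    refine tendsto_nhds_unique l1 (l3.congr fun n => ?_)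
    rw [hYY]; simp only [star_mul, fEps_star, hh]; noncomm_ring

/-! ### Pre-quasitraces -/

structure PreQT (φ : R → ℝ≥0∞) : Prop where
  zero : φ 0 = 0
  smul : ∀ (r : ℝ) (a : R), 0 < r → 0 ≤ a → φ (r • a) = ENNReal.ofReal r * φ a
  add : ∀ a b : R, 0 ≤ a → 0 ≤ b → a * b = b * a → φ (a + b) = φ a + φ b
  tr : ∀ x : R, φ (star x * x) = φ (x * star x)

/-- dimension function -/
def D (φ : R → ℝ≥0∞) (a : R) : ℝ≥0∞ := ⨆ n : ℕ, φ (fEps (1 / (n + 1)) a)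

theorem hsq_nonneg {h : R} (hh : star h = h) : 0 ≤ h * h := by
  have := star_mul_self_nonneg h; rwa [hh] at this

theorem conj_le_norm {h d : R} (hh : star h = h) (hd : star d = d) :
    h * d * h ≤ ‖d‖ • (h * h) := by
  have := CStarAlgebra.star_left_conjugate_le_norm_smul (a := h) (b := d) (hb := hd)
  rwa [hh] at this

theorem conj_mono {h d e : R} (hh : star h = h) (hd : d ≤ e) :
    h * d * h ≤ h * e * h := by
  have := star_left_conjugate_le_conjugate hd h
  rwa [hh] at this

theorem smul_mono {r s : ℝ} (h : r ≤ s) {a : R} (ha : 0 ≤ a) : r • a ≤ s • a := by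
  have : (0 : R) ≤ (s - r) • a := smul_nonneg (sub_nonneg.2 h) ha
  rw [sub_smul] at this
  exact sub_nonneg.1 this

theorem sa_of_nonneg {a : R} (ha : 0 ≤ a) : star a = a := (IsSelfAdjoint.of_nonneg ha).star_eq

namespace PreQT
variable {φ : R → ℝ≥0∞} (hφ : PreQT φ)

theorem mono_comm (hφ : PreQT φ) {a b : R} (ha : 0 ≤ a) (hab : a ≤ b) (hc : a * b = b * a) :
    φ a ≤ φ b := by
  have := hφ.add a (b - a) ha (sub_nonneg.2 hab) (by rw [mul_sub, sub_mul, hc])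
  rw [add_sub_cancel] at this
  rw [this]; exact le_self_add

theorem mono_fun (hφ : PreQT φ) {f g : ℝ → ℝ} {a : R} (ha : 0 ≤ a) (hf : Continuous f)
    (hf0 : f 0 = 0) (hg : Continuous g) (hg0 : g 0 = 0) (h0 : ∀ t, 0 ≤ t → 0 ≤ f t)
    (h : ∀ t, 0 ≤ t → f t ≤ g t) : φ (cfcₙ f a) ≤ φ (cfcₙ g a) :=
  hφ.mono_comm (c_nonneg ha h0) (c_mono ha hf hf0 hg hg0 h) (c_comm _ _ _)

theorem le_D (hφ : PreQT φ) {a : R} (ha : 0 ≤ a) {ε : ℝ} (hε : 0 < ε) :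
    φ (fEps ε a) ≤ D φ a := by
  obtain ⟨n, hn⟩ := exists_nat_one_div_lt hε
  refine le_trans ?_ (le_iSup _ n)
  exact hφ.mono_fun ha (cutoff_cont _) (cutoff_zero _) (cutoff_cont _) (cutoff_zero _)
    (fun t _ => cutoff_nonneg _ _) fun t ht => cutoff_anti (by positivity) hn.le ht

theorem mono_mul (hφ : PreQT φ) {w e : R} (hw : 0 ≤ w) (hw1 : ‖w‖ ≤ 1) (he : star e = e)
    (hew : e * w = w) : φ w ≤ φ (e * e) := by
  have hwe : w * e = w := by
    have := congrArg star hew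
    rwa [star_mul, he, sa_of_nonneg hw] at this
  have h1 : w ≤ e * e := by
    calc w = e * w * e := by rw [hew, hwe]
      _ ≤ ‖w‖ • (e * e) := conj_le_norm he (sa_of_nonneg hw)
      _ ≤ (1 : ℝ) • (e * e) := smul_mono hw1 (hsq_nonneg he)
      _ = e * e := one_smul _ _
  refine hφ.mono_comm hw h1 ?_
  rw [← mul_assoc, hwe, hwe, mul_assoc, hew, hew]

theorem core (hφ : PreQT φ) {h z e : R} (hh : star h = h) (hn : ‖h‖ ≤ 1) {c : ℝ} (hc : 0 < c)
    (hle : c • (h * h) ≤ star z * z) (he : star e = e) (hez : e * z = z) :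
    φ (h * h) ≤ φ (e * e) := by
  have hle' : h * h ≤ star (√(1 / c) • z) * (√(1 / c) • z) := by
    rw [star_smul, smul_mul_smul_comm, star_trivial, Real.mul_self_sqrt (by positivity)]
    have : (1 / c) • (c • (h * h)) ≤ (1 / c) • (star z * z) :=
      smul_le_smul_of_nonneg_left hle (by positivity)
    rwa [smul_smul, one_div_mul_cancel hc.ne', one_smul] at this
  obtain ⟨Y, hY, hYY⟩ := exists_factor hh hle'
  have heY : e * Y = Y := by
    have hcl : IsClosed {y : R | e * y = y} :=
      isClosed_eq (continuous_const.mul continuous_id) continuous_id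
    refine hcl.closure_subset_iff.2 ?_ hY
    rintro _ ⟨r, rfl⟩
    show e * _ = _
    rw [← mul_assoc, mul_smul_comm, hez]
  rw [← hYY, hφ.tr]
  refine hφ.mono_mul (mul_star_self_nonneg Y) ?_ he (by rw [← mul_assoc, heY])
  rw [CStarRing.norm_self_mul_star, ← CStarRing.norm_star_mul_self, hYY]
  exact (norm_mul_le _ _).trans (mul_le_one₀ hn (norm_nonneg _) hn)

theorem sum_fun (hφ : PreQT φ) {a : R} (ha : 0 ≤ a) (f : ℕ → ℝ → ℝ) (hf : ∀ i, Continuous (f i))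
    (hf0 : ∀ i, f i 0 = 0) (h : ∀ i t, 0 ≤ t → 0 ≤ f i t) (N : ℕ) :
    φ (cfcₙ (fun t => ∑ i ∈ Finset.range N, f i t) a)
      = ∑ i ∈ Finset.range N, φ (cfcₙ (f i) a) := by
  induction N with
  | zero =>
    simp only [Finset.range_zero, Finset.sum_empty]
    have : cfcₙ (fun _ : ℝ => (0 : ℝ)) a = 0 := cfcₙ_const_zero ℝ a
    rw [this, hφ.zero]
  | succ N ih =>
    rw [Finset.sum_range_succ, ← ih, ← hφ.add _ _
      (c_nonneg ha fun t ht => Finset.sum_nonneg fun i _ => h i t ht)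
      (c_nonneg ha (h N)) (c_comm _ _ _),
      c_add (by have := hf; fun_prop) (by simp [hf0]) (hf N) (hf0 N)]
    congr 2; ext t; rw [Finset.sum_range_succ]

end PreQT

/-- lower bound for `h m h` with `h = f(m)` -/
theorem conj_lower {f : ℝ → ℝ} {m : R} (hm : 0 ≤ m) (hf : Continuous f) (hf0 : f 0 = 0) {c : ℝ}
    (h : ∀ t, 0 ≤ t → c * (f t * f t) ≤ f t * t * f t) :
    c • (cfcₙ f m * cfcₙ f m) ≤ cfcₙ f m * m * cfcₙ f m := by
  rw [c_mul_id hf hf0 hm, c_mul hf hf0 hf hf0, c_mul (by fun_prop) (by simp [hf0]) hf hf0,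
    c_smul (by fun_prop) (by simp [hf0])]
  exact c_mono hm (by fun_prop) (by simp [hf0]) (by fun_prop) (by simp [hf0]) h

/-- slices -/
def slice (δ : ℝ) (i : ℕ) : ℝ → ℝ := fun t => min (max (t - i * δ) 0) δ

theorem slice_cont (δ : ℝ) (i : ℕ) : Continuous (slice δ i) := by unfold slice; fun_prop

theorem slice_nonpos {δ : ℝ} (hδ : 0 < δ) (i : ℕ) {t : ℝ} (ht : t ≤ i * δ) : slice δ i t = 0 := by
  unfold slice; rw [max_eq_right (by linarith), min_eq_left hδ.le]

theorem slice_zero {δ : ℝ} (hδ : 0 < δ) (i : ℕ) : slice δ i 0 = 0 :=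
  slice_nonpos hδ i (by positivity)

theorem slice_nonneg {δ : ℝ} (hδ : 0 < δ) (i : ℕ) (t : ℝ) : 0 ≤ slice δ i t := by
  unfold slice; exact le_min (le_max_right _ _) hδ.le

theorem slice_sum {δ : ℝ} (hδ : 0 < δ) (N : ℕ) (t : ℝ) :
    ∑ i ∈ Finset.range N, slice δ i t = min (max t 0) (N * δ) := by
  induction N with
  | zero => simp
  | succ N ih =>
    rw [Finset.sum_range_succ, ih]
    unfold slice
    push_cast
    have : 0 ≤ N * δ := by positivity
    rcases le_total t 0 with h | h
    · rw [max_eq_right h, max_eq_right (by linarith), min_eq_left this, min_eq_left hδ.le,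
        min_eq_left (by nlinarith)]; simp
    · rw [max_eq_left h]
      rcases le_total t (N * δ) with h' | h'
      · rw [min_eq_left h', max_eq_right (by linarith), min_eq_left hδ.le,
          min_eq_left (by nlinarith)]; simp
      · rw [min_eq_right h', max_eq_left (by linarith)]
        rcases le_total (t - N * δ) δ with h'' | h''
        · rw [min_eq_left h'', min_eq_left (by linarith)]; ring
        · rw [min_eq_right h'', min_eq_right (by linarith)]; ring

/-- monotonicity with loss -/
theorem PreQT.loss {φ : R → ℝ≥0∞} (hφ : PreQT φ) {m n : R} (hm : 0 ≤ m) (hn : 0 ≤ n) {κ δ : ℝ}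
    (hκ : 0 ≤ κ) (hδ : 0 < δ)
    (H : ∀ h : R, star h = h → h * m * h ≤ h * n * h + κ • (h * h)) :
    φ (cfcₙ (fun t : ℝ => max (t - (κ + 2 * δ)) 0) m) ≤ φ n := by
  obtain ⟨N, hN⟩ := exists_nat_gt (‖m‖ / δ)
  rw [div_lt_iff₀ hδ] at hN
  set S : ℕ → ℝ → ℝ := fun i t => slice δ i (t - (κ + 2 * δ)) with hS
  have hSc : ∀ i, Continuous (S i) := fun i => by
    have := slice_cont δ i
    simp only [hS]; fun_prop
  have hS0' : ∀ (i : ℕ) (t : ℝ), t ≤ κ + (i + 2) * δ → S i t = 0 := fun i t ht =>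
    slice_nonpos hδ i (by nlinarith)
  have hS0 : ∀ i, S i 0 = 0 := fun i => hS0' i 0 (by positivity)
  have hSn : ∀ i t, 0 ≤ S i t := fun i t => slice_nonneg hδ i _
  have hSle : ∀ i t, S i t ≤ δ := fun i t => min_le_right _ _
  have e1 : cfcₙ (fun t : ℝ => max (t - (κ + 2 * δ)) 0) m
      = cfcₙ (fun t => ∑ i ∈ Finset.range N, S i t) m := by
    refine cfcₙ_congr fun t ht => ?_
    simp only [hS]
    rw [slice_sum hδ, min_eq_left]
    have := spec_le ht hm
    refine max_le ?_ ?_ <;> nlinarith [norm_nonneg m]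
  rw [e1, hφ.sum_fun hm S hSc hS0 fun i t _ => hSn i t]
  have e2 : ∑ i ∈ Finset.range N, φ (cfcₙ (slice δ i) n) ≤ φ n := by
    rw [← hφ.sum_fun hn _ (slice_cont δ) (slice_zero hδ) fun i t _ => slice_nonneg hδ i t]
    conv_rhs => rw [← c_id hn]
    refine hφ.mono_fun hn ?_ ?_ continuous_id rfl ?_ ?_
    · have := slice_cont δ; fun_prop
    · simp [slice_zero hδ]
    · intro t _; exact Finset.sum_nonneg fun i _ => slice_nonneg hδ i t
    · intro t ht; rw [slice_sum hδ, max_eq_left ht]; exact min_le_left _ _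
  refine le_trans (Finset.sum_le_sum fun i _ => ?_) e2
  -- slice comparison
  set f : ℝ → ℝ := fun t => √(S i t / δ) with hf
  set g : ℝ → ℝ := fun t => √(slice δ i t / δ) with hg
  have hfc : Continuous f := by have := hSc i; simp only [hf]; fun_prop
  have hgc : Continuous g := by have := slice_cont δ i; simp only [hg]; fun_prop
  have hf0 : f 0 = 0 := by simp [hf, hS0]
  have hg0 : g 0 = 0 := by simp [hg, slice_zero hδ]
  have hff : cfcₙ (S i) m = δ • (cfcₙ f m * cfcₙ f m) := by
    rw [c_mul hfc hf0 hfc hf0, c_smul (by fun_prop) (by simp [hf0])]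
    congr 1; ext t
    simp only [hf]
    rw [Real.mul_self_sqrt (div_nonneg (hSn i t) hδ.le)]; field_simp
  have hgg : cfcₙ (slice δ i) n = δ • (cfcₙ g n * cfcₙ g n) := by
    rw [c_mul hgc hg0 hgc hg0, c_smul (by fun_prop) (by simp [hg0])]
    congr 1; ext t
    simp only [hg]
    rw [Real.mul_self_sqrt (div_nonneg (slice_nonneg hδ i t) hδ.le)]; field_simp
  rw [hff, hgg, hφ.smul _ _ hδ (hsq_nonneg (c_star _ _)), hφ.smul _ _ hδ (hsq_nonneg (c_star _ _))]
  gcongr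
  set h := cfcₙ f m with hh
  have hhs : star h = h := c_star _ _
  set b : ℝ → ℝ := fun t => max (t - (i + 1) * δ) 0 with hb
  have hid : (0 : ℝ) ≤ (i + 1) * δ := by positivity
  have hbc : Continuous b := by simp only [hb]; fun_prop
  have hb0 : b 0 = 0 := by simp only [hb]; exact max_eq_right (by linarith)
  have hbn : ∀ t, 0 ≤ b t := fun t => le_max_right _ _
  set r : ℝ → ℝ := fun t => √(b t) with hr
  have hrc : Continuous r := by simp only [hr]; fun_prop
  have hr0 : r 0 = 0 := by simp [hr, hb0]
  have hrr : cfcₙ r n * cfcₙ r n = cfcₙ b n := by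
    rw [c_mul hrc hr0 hrc hr0]; congr 1; ext t; exact Real.mul_self_sqrt (hbn t)
  refine hφ.core (z := cfcₙ r n * h) hhs ?_ hδ ?_ (c_star _ _) ?_
  · refine c_norm_le hm fun t _ => ?_
    rw [abs_of_nonneg (Real.sqrt_nonneg _)]
    exact Real.sqrt_le_one.2 (by rw [div_le_one hδ]; exact hSle i t)
  · have a1 : (κ + (i + 2) * δ) • (h * h) ≤ h * m * h := by
      refine conj_lower hm hfc hf0 fun t ht => ?_
      rcases le_total t (κ + (i + 2) * δ) with h' | h'
      · simp [hf, hS0' i t h']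
      · nlinarith [mul_self_nonneg (f t)]
    have a2 := H h hhs
    have a3 : h * (n - cfcₙ b n) * h ≤ ((i + 1) * δ) • (h * h) := by
      refine (conj_le_norm hhs ?_).trans (smul_mono ?_ (hsq_nonneg hhs))
      · rw [star_sub, sa_of_nonneg hn, c_star]
      · conv_lhs => enter [1, 1]; rw [← c_id hn]
        rw [c_sub (by fun_prop) rfl hbc hb0]
        refine c_norm_le hn fun t ht => ?_
        simp only [hb]
        rcases le_total t ((i + 1) * δ) with h' | h'
        · rw [max_eq_right (by linarith), abs_of_nonneg (by linarith)]; linarith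
        · rw [max_eq_left (by linarith), abs_of_nonneg (by linarith)]; linarith
    have e : star (cfcₙ r n * h) * (cfcₙ r n * h) = h * cfcₙ b n * h := by
      rw [star_mul, hhs, c_star, ← hrr]; noncomm_ring
    rw [e]
    have a4 := a1.trans a2
    have a5 : h * n * h = h * (n - cfcₙ b n) * h + h * cfcₙ b n * h := by noncomm_ring
    rw [a5] at a4
    have a6 := a4.trans (add_le_add_left (add_le_add_left a3 _) _)
    have a7 : (κ + (i + 2) * δ) • (h * h) = δ • (h * h) + (((i + 1) * δ) • (h * h) + κ • (h * h)) := by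
      rw [← add_smul, ← add_smul]; congr 1; ring
    rw [a7, add_right_comm, add_comm (δ • _)] at a6
    exact le_of_add_le_add_left a6
  · rw [← mul_assoc, c_mul hgc hg0 hrc hr0]
    congr 2; ext t
    rcases le_total t ((i + 1) * δ) with h' | h'
    · have : r t = 0 := by
        simp only [hr, hb]; rw [max_eq_right (by linarith)]; simp
      simp [this]
    · have : g t = 1 := by
        simp only [hg, slice]
        rw [max_eq_left (by nlinarith), min_eq_right (by nlinarith), div_self hδ.ne']; simp
      simp [this]

/-! ### Cuntz comparison and dimension functions -/

theorem H_of_norm {m n : R} (hm : 0 ≤ m) (hn : 0 ≤ n) {κ : ℝ} (hκ : ‖m - n‖ ≤ κ) (h : R)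
    (hh : star h = h) : h * m * h ≤ h * n * h + κ • (h * h) := by
  have h1 : h * (m - n) * h ≤ κ • (h * h) :=
    (conj_le_norm hh (by rw [star_sub, sa_of_nonneg hm, sa_of_nonneg hn])).trans
      (smul_mono hκ (hsq_nonneg hh))
  have h2 : h * m * h = h * n * h + h * (m - n) * h := by noncomm_ring
  rw [h2]; gcongr

theorem norm_sub_conj_fEps {b : R} (hb : 0 ≤ b) {ε : ℝ} (hε : 0 < ε) :
    ‖b - fEps ε b * b * fEps ε b‖ ≤ ε := by
  have hc := cutoff_cont ε
  have h0 := cutoff_zero ε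
  have e : b - fEps ε b * b * fEps ε b = cfcₙ (fun t => t - cutoff ε t * t * cutoff ε t) b := by
    conv_lhs => enter [1]; rw [← c_id hb]
    rw [fEps, c_mul_id hc h0 hb, c_mul (by fun_prop) (by simp) hc h0,
      c_sub (by fun_prop) rfl (by fun_prop) (by simp)]
  rw [e]
  refine c_norm_le hb fun t ht => ?_
  have h1 := cutoff_nonneg ε t
  have h2 := cutoff_le_one ε t
  rcases le_total ε t with h | h
  · rw [cutoff_eq_one hε h]; simp; exact hε.le
  · have h3 : cutoff ε t * cutoff ε t ≤ 1 := by nlinarith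
    rw [abs_of_nonneg (by nlinarith)]
    nlinarith [mul_nonneg ht (mul_nonneg h1 h1)]

theorem conj_fEps_nonneg {b : R} (hb : 0 ≤ b) (ε : ℝ) : 0 ≤ fEps ε b * b * fEps ε b := by
  have := star_left_conjugate_nonneg hb (fEps ε b)
  rwa [fEps_star] at this

theorem PreQT.D_le {φ : R → ℝ≥0∞} (hφ : PreQT φ) {y b : R} (hy : 0 ≤ y) (hb : 0 ≤ b)
    (H : ∀ κ : ℝ, 0 < κ → ∃ r : R, ∀ h : R, star h = h →
      h * y * h ≤ h * (star r * b * r) * h + κ • (h * h)) : D φ y ≤ D φ b := by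
  refine iSup_le fun k => ?_
  set δ : ℝ := 1 / (k + 1) with hδdef
  have hδ : 0 < δ := by positivity
  obtain ⟨r, hr⟩ := H (δ / 8) (by positivity)
  set ε : ℝ := δ / 8 / (‖r‖ * ‖r‖ + 1) with hε
  have hεp : 0 < ε := by positivity
  set f : ℝ → ℝ := fun t => √(cutoff δ t) with hf
  have hfc : Continuous f := by have := cutoff_cont δ; simp only [hf]; fun_prop
  have hf0 : f 0 = 0 := by simp [hf, cutoff_zero]
  set h := cfcₙ f y with hh
  have hhs : star h = h := c_star _ _
  have hff : h * h = fEps δ y := by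
    rw [hh, c_mul hfc hf0 hfc hf0, fEps]; congr 1; ext t
    exact Real.mul_self_sqrt (cutoff_nonneg _ _)
  set p := fEps ε b with hp
  set e := fEps (ε / 2) b with he
  have hps : star p = p := fEps_star _ _
  have hep : e * p = p := fEps_mul (by positivity) le_rfl
  obtain ⟨q, hq0, hq2⟩ : ∃ q : R, star q = q ∧ q * q = b :=
    ⟨CFC.sqrt b, sa_of_nonneg (CFC.sqrt_nonneg b), CFC.sqrt_mul_sqrt_self b hb⟩
  have heq : e * q = q * e := c_commute (by rw [← hq2, mul_assoc]) _
  have e0 : h * (star r * (p * b * p) * r) * h = star (q * p * (r * h)) * (q * p * (r * h)) := by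
    simp only [star_mul, hq0, hps, hhs]
    rw [← hq2]; noncomm_ring
  rw [← hff]
  refine le_trans (hφ.core (z := q * p * (r * h)) (e := e) (c := δ / 4) hhs ?_
    (by positivity) ?_ (fEps_star _ _) ?_) ?_
  · refine c_norm_le hy fun t _ => ?_
    rw [abs_of_nonneg (Real.sqrt_nonneg _)]
    exact Real.sqrt_le_one.2 (cutoff_le_one _ _)
  · have a1 : (δ / 2) • (h * h) ≤ h * y * h := by
      refine conj_lower hy hfc hf0 fun t ht => ?_
      rcases le_total t (δ / 2) with h' | h'
      · simp [hf, cutoff_eq_zero hδ h']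
      · nlinarith [mul_self_nonneg (f t)]
    have a2 := hr h hhs
    have a3 : h * (star r * (b - p * b * p) * r) * h ≤ (δ / 8) • (h * h) := by
      have hbs : star (b - p * b * p) = b - p * b * p := by
        rw [star_sub, star_mul, star_mul, hps, sa_of_nonneg hb, mul_assoc]
      refine (conj_le_norm hhs ?_).trans (smul_mono ?_ (hsq_nonneg hhs))
      · rw [star_mul, star_mul, star_star, hbs]; noncomm_ring
      · have n1 := norm_sub_conj_fEps hb hεp
        calc ‖star r * (b - p * b * p) * r‖ ≤ ‖star r‖ * ‖b - p * b * p‖ * ‖r‖ :=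
              (norm_mul_le _ _).trans (by gcongr; exact norm_mul_le _ _)
          _ ≤ ‖r‖ * ε * ‖r‖ := by rw [norm_star]; gcongr
          _ ≤ δ / 8 := by
            have h1 : ε * (‖r‖ * ‖r‖ + 1) = δ / 8 := by
              rw [hε]; field_simp
            nlinarith
    rw [← e0]
    have a4 : h * (star r * b * r) * h = h * (star r * (b - p * b * p) * r) * h
      + h * (star r * (p * b * p) * r) * h := by noncomm_ring
    rw [a4] at a2
    have a5 := (a1.trans a2).trans (add_le_add_left (add_le_add_left a3 _) _)
    have a7 : (δ / 2) • (h * h) = (δ / 4) • (h * h) + ((δ / 8) • (h * h) + (δ / 8) • (h * h)) := by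
      rw [← add_smul, ← add_smul]; congr 1; ring
    rw [a7, add_right_comm, add_comm ((δ / 4) • _)] at a5
    exact le_of_add_le_add_left a5
  · have : e * (q * p) = q * p := by rw [← mul_assoc, heq, mul_assoc, hep]
    rw [← mul_assoc, this]
  · refine le_trans ?_ (hφ.le_D hb (ε := ε / 2) (by positivity))
    rw [he, fEps]
    have hc := cutoff_cont (ε / 2)
    have h0 := cutoff_zero (ε / 2)
    rw [c_mul hc h0 hc h0]
    refine hφ.mono_fun hb (by fun_prop) (by simp [h0]) hc h0 ?_ ?_ <;> intro t _ <;>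
      nlinarith [cutoff_nonneg (ε / 2) t, cutoff_le_one (ε / 2) t]

theorem PreQT.D_le_of_norm {φ : R → ℝ≥0∞} (hφ : PreQT φ) {y b : R} (hy : 0 ≤ y) (hb : 0 ≤ b)
    (H : ∀ κ : ℝ, 0 < κ → ∃ r : R, ‖y - star r * b * r‖ ≤ κ) : D φ y ≤ D φ b := by
  refine hφ.D_le hy hb fun κ hκ => ?_
  obtain ⟨r, hr⟩ := H κ hκ
  exact ⟨r, H_of_norm hy (star_left_conjugate_nonneg hb r) hr⟩

theorem CuntzLE.norm {y b : R} (H : CuntzLE y b) {κ : ℝ} (hκ : 0 < κ) :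
    ∃ r : R, ‖y - star r * b * r‖ ≤ κ := by
  obtain ⟨x, hx⟩ := H
  obtain ⟨n, hn⟩ := (hx.eventually (gt_mem_nhds hκ)).exists
  exact ⟨x n, hn.le⟩

theorem PreQT.D_le_of_le_smul {φ : R → ℝ≥0∞} (hφ : PreQT φ) {y b : R} (hy : 0 ≤ y) (hb : 0 ≤ b)
    {C : ℝ} (hC : 0 ≤ C) (h : y ≤ C • b) : D φ y ≤ D φ b := by
  refine hφ.D_le hy hb fun κ hκ => ?_
  refine ⟨√C • fEps (κ / (C + 1)) b, fun h hh => ?_⟩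
  have hε : 0 < κ / (C + 1) := by positivity
  have h1 := conj_mono hh ‹y ≤ C • b›
  have e : star (√C • fEps (κ / (C + 1)) b) * b * (√C • fEps (κ / (C + 1)) b)
      = C • (fEps (κ / (C + 1)) b * b * fEps (κ / (C + 1)) b) := by
    rw [star_smul, star_trivial, fEps_star, smul_mul_assoc, smul_mul_smul_comm,
      Real.mul_self_sqrt hC]
  rw [e]
  have h2 := H_of_norm hb (conj_fEps_nonneg hb _) (norm_sub_conj_fEps hb hε) h hh
  have h3 := smul_le_smul_of_nonneg_left h2 hC
  rw [smul_add, smul_smul] at h3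
  rw [mul_smul_comm, smul_mul_assoc] at h1 ⊢
  refine h1.trans (h3.trans ?_)
  refine add_le_add_right (smul_mono ?_ (hsq_nonneg hh)) _
  rw [mul_div_assoc', div_le_iff₀ (by positivity)]; nlinarith

theorem PreQT.D_mono {φ : R → ℝ≥0∞} (hφ : PreQT φ) {y b : R} (hy : 0 ≤ y) (h : y ≤ b) :
    D φ y ≤ D φ b :=
  hφ.D_le_of_le_smul hy (hy.trans h) zero_le_one (by rwa [one_smul])

theorem PreQT.D_tr_le {φ : R → ℝ≥0∞} (hφ : PreQT φ) (s : R) :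
    D φ (s * star s) ≤ D φ (star s * s) := by
  have hw : 0 ≤ s * star s := mul_star_self_nonneg s
  refine hφ.D_le_of_norm hw (star_mul_self_nonneg s) fun κ hκ => ?_
  set w := s * star s with hwdef
  refine ⟨star s * cfcₙ (psi κ) w, ?_⟩
  have hc := cutoff_cont κ
  have h0 := cutoff_zero κ
  have hp := psi_cont hκ
  have hp0 := psi_zero κ
  have e : star (star s * cfcₙ (psi κ) w) * (star s * s) * (star s * cfcₙ (psi κ) w)
      = fEps κ w * w * fEps κ w := by
    have e1 : star (star s * cfcₙ (psi κ) w) * (star s * s) * (star s * cfcₙ (psi κ) w)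
      = cfcₙ (psi κ) w * w * (w * cfcₙ (psi κ) w) := by
      simp only [star_mul, star_star, c_star, hwdef]; noncomm_ring
    rw [e1, ← c_commute (rfl : w * w = w * w), c_mul_id hp hp0 hw,
      c_mul (by fun_prop) (by simp) (by fun_prop) (by simp), fEps, c_mul_id hc h0 hw,
      c_mul (by fun_prop) (by simp) hc h0]
    refine c_congr hw fun t ht => ?_
    have := psi_sq hκ hκ ht
    linear_combination t * this
  rw [e]
  exact norm_sub_conj_fEps hw hκ

theorem PreQT.D_tr {φ : R → ℝ≥0∞} (hφ : PreQT φ) (s : R) :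
    D φ (s * star s) = D φ (star s * s) := by
  refine le_antisymm (hφ.D_tr_le s) ?_
  have := hφ.D_tr_le (star s)
  rwa [star_star] at this

/-! ### Intertwining -/

theorem intertwine {f : ℝ → ℝ} (hf : Continuous f) (hf0 : f 0 = 0) (x : R) :
    x * cfcₙ f (star x * x) = cfcₙ f (x * star x) * x := by
  set u := star x * x with hu
  set v := x * star x with hv
  have hun : 0 ≤ u := star_mul_self_nonneg x
  have hvn : 0 ≤ v := mul_star_self_nonneg x
  have hpoly : ∀ q : Polynomial ℝ, x * cfcₙ (fun t => t * q.eval t) u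
      = cfcₙ (fun t => t * q.eval t) v * x := by
    intro q
    induction q using Polynomial.induction_on with
    | C a =>
      simp only [Polynomial.eval_C]
      have e : ∀ w : R, 0 ≤ w → cfcₙ (fun t : ℝ => t * a) w = a • w := by
        intro w hw
        nth_rewrite 2 [← c_id hw]
        rw [c_smul (by fun_prop) rfl]; congr 1; ext t; ring
      rw [e u hun, e v hvn, mul_smul_comm, smul_mul_assoc, hu, hv, mul_assoc]
    | add p q hp hq =>
      simp only [Polynomial.eval_add, mul_add]
      rw [← c_add (by fun_prop) (by simp) (by fun_prop) (by simp),
        ← c_add (by fun_prop) (by simp) (by fun_prop) (by simp), mul_add, add_mul, hp, hq]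
    | monomial n a h =>
      have e : ∀ w : R, 0 ≤ w → cfcₙ (fun t => t * (Polynomial.C a * Polynomial.X ^ (n + 1)).eval t) w
          = cfcₙ (fun t => t * (Polynomial.C a * Polynomial.X ^ n).eval t) w * w := by
        intro w hw
        rw [c_mul_id (by fun_prop) (by simp) hw]
        congr 1; ext t; simp [pow_succ]; ring
      rw [e u hun, e v hvn, ← mul_assoc, h, mul_assoc, mul_assoc, hu, hv, mul_assoc]
  rw [← sub_eq_zero, ← norm_le_zero_iff]
  refine le_of_forall_pos_le_add fun ε hε => ?_
  rw [zero_add]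
  set M := ‖u‖ + ‖v‖ with hM
  set η := ε / (4 * (‖x‖ + 1)) with hη
  have hηp : 0 < η := by positivity
  obtain ⟨p, hp⟩ := exists_polynomial_near_of_continuousOn 0 M f hf.continuousOn η hηp
  have hpe : ∀ t, t * p.divX.eval t = p.eval t - p.coeff 0 := by
    intro t
    conv_rhs => rw [← Polynomial.divX_mul_X_add p]
    simp; ring
  have h00 : |p.coeff 0| < η := by
    have := hp 0 ⟨le_rfl, by positivity⟩
    rwa [hf0, sub_zero, ← Polynomial.coeff_zero_eq_eval_zero] at this
  set g : ℝ → ℝ := fun t => t * p.divX.eval t with hg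
  have hgc : Continuous g := by simp only [hg]; fun_prop
  have hg0 : g 0 = 0 := by simp [hg]
  have bd : ∀ w : R, 0 ≤ w → ‖w‖ ≤ M → ‖cfcₙ f w - cfcₙ g w‖ ≤ 2 * η := by
    intro w hw hwM
    rw [c_sub hf hf0 hgc hg0]
    refine norm_cfcₙ_le fun t ht => ?_
    have h1 := hp t ⟨spec_nonneg hw ht, (spec_le ht hw).trans hwM⟩
    simp only [hg, hpe]
    rw [Real.norm_eq_abs]
    rw [abs_lt] at h1 h00
    rw [abs_le]; constructor <;> linarith
  have b1 := bd u hun (by rw [hM]; linarith [norm_nonneg v])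
  have b2 := bd v hvn (by rw [hM]; linarith [norm_nonneg u])
  have e : x * cfcₙ f u - cfcₙ f v * x
      = x * (cfcₙ f u - cfcₙ g u) - (cfcₙ f v - cfcₙ g v) * x := by
    have := hpoly p.divX
    rw [mul_sub, sub_mul, this]; abel
  rw [e]
  calc _ ≤ ‖x * (cfcₙ f u - cfcₙ g u)‖ + ‖(cfcₙ f v - cfcₙ g v) * x‖ := norm_sub_le _ _
    _ ≤ ‖x‖ * (2 * η) + 2 * η * ‖x‖ := by
      gcongr
      · exact (norm_mul_le _ _).trans (by gcongr)
      · exact (norm_mul_le _ _).trans (by gcongr)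
    _ ≤ ε := by
      have : η * (4 * (‖x‖ + 1)) = ε := by rw [hη]; field_simp
      nlinarith

/-! ### Regularisation -/

/-- `(a - ε)₊` -/
def pos (ε : ℝ) (a : R) : R := cfcₙ (fun t : ℝ => max (t - ε) 0) a

theorem pos_nonneg {a : R} (ha : 0 ≤ a) (ε : ℝ) : 0 ≤ pos ε a :=
  c_nonneg ha fun _ _ => le_max_right _ _

theorem posf_zero {ε : ℝ} (hε : 0 ≤ ε) : max ((0 : ℝ) - ε) 0 = 0 := max_eq_right (by linarith)

theorem norm_sub_pos {a : R} (ha : 0 ≤ a) {ε : ℝ} (hε : 0 ≤ ε) : ‖a - pos ε a‖ ≤ ε := by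
  conv_lhs => enter [1, 1]; rw [← c_id ha]
  rw [pos, c_sub (by fun_prop) rfl (g := fun t => max (t - ε) 0) (by fun_prop)
    (posf_zero hε)]
  refine c_norm_le ha fun t ht => ?_
  rcases le_total t ε with h' | h'
  · rw [max_eq_right (by linarith), abs_of_nonneg (by linarith)]; linarith
  · rw [max_eq_left (by linarith), abs_of_nonneg (by linarith)]; linarith

theorem pos_le {a : R} (ha : 0 ≤ a) {ε : ℝ} (hε : 0 ≤ ε) : pos ε a ≤ a := by
  conv_rhs => rw [← c_id ha]
  refine c_mono ha (by fun_prop) (posf_zero hε) (by fun_prop) rfl fun t ht => ?_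
  exact max_le (by linarith) ht

open Classical in
/-- lower semicontinuous regularisation -/
def reg (φ : R → ℝ≥0∞) (a : R) : ℝ≥0∞ :=
  if 0 ≤ a then ⨆ ε : {ε : ℝ // 0 < ε}, φ (pos ε a) else 0

theorem le_reg (φ : R → ℝ≥0∞) {a : R} (ha : 0 ≤ a) {ε : ℝ} (hε : 0 < ε) :
    φ (pos ε a) ≤ reg φ a := by
  rw [reg, if_pos ha]
  exact le_iSup (fun ε : {ε : ℝ // 0 < ε} => φ (pos ε a)) ⟨ε, hε⟩

theorem reg_le_of {φ : R → ℝ≥0∞} {a : R} (ha : 0 ≤ a) {C : ℝ≥0∞}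
    (h : ∀ ε : ℝ, 0 < ε → φ (pos ε a) ≤ C) : reg φ a ≤ C := by
  rw [reg, if_pos ha]
  exact iSup_le fun ε => h ε ε.2

theorem scale_lim {x y : ℝ≥0∞} (h : ∀ θ : ℝ, 0 < θ → θ < 1 → ENNReal.ofReal θ * x ≤ y) :
    x ≤ y := by
  have h1 : Tendsto (fun n : ℕ => (1 : ℝ) - 1 / ((n : ℝ) + 1)) atTop (𝓝 (1 - 0)) :=
    tendsto_const_nhds.sub tendsto_one_div_add_atTop_nhds_zero_nat
  rw [sub_zero] at h1
  have h2 : Tendsto (fun n : ℕ => ENNReal.ofReal ((1 : ℝ) - 1 / ((n : ℝ) + 1)) * x) atTop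
      (𝓝 (1 * x)) := by
    refine ENNReal.Tendsto.mul_const ?_ (Or.inl one_ne_zero)
    have := ENNReal.tendsto_ofReal h1
    rwa [ENNReal.ofReal_one] at this
  rw [one_mul] at h2
  refine le_of_tendsto h2 ?_
  filter_upwards [eventually_gt_atTop 0] with n hn
  have hn' : (0 : ℝ) < n := by exact_mod_cast hn
  refine h _ ?_ ?_
  · rw [sub_pos, div_lt_one (by positivity)]; linarith
  · have : (0 : ℝ) < 1 / (n + 1) := by positivity
    linarith

theorem mono_H {m n : R} (h : m ≤ n) (k : R) (hk : star k = k) :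
    k * m * k ≤ k * n * k + (0 : ℝ) • (k * k) := by
  rw [zero_smul, add_zero]; exact conj_mono hk h

namespace PreQT

theorem loss' {φ : R → ℝ≥0∞} (hφ : PreQT φ) {m n : R} (hm : 0 ≤ m) (hn : 0 ≤ n) {κ ε : ℝ}
    (hκ : 0 ≤ κ) (hε : κ < ε)
    (H : ∀ h : R, star h = h → h * m * h ≤ h * n * h + κ • (h * h)) : φ (pos ε m) ≤ φ n := by
  have := hφ.loss hm hn hκ (δ := (ε - κ) / 2) (by linarith) H
  have e : κ + 2 * ((ε - κ) / 2) = ε := by ring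
  rwa [e] at this

theorem reg_le {φ : R → ℝ≥0∞} (hφ : PreQT φ) {a : R} (ha : 0 ≤ a) : reg φ a ≤ φ a :=
  reg_le_of ha fun _ hε => hφ.loss' ha ha le_rfl hε (mono_H le_rfl)

theorem reg_mono {φ : R → ℝ≥0∞} (hφ : PreQT φ) {a b : R} (ha : 0 ≤ a) (hab : a ≤ b) :
    reg φ a ≤ reg φ b := by
  have hb := ha.trans hab
  refine reg_le_of ha fun ε hε => ?_
  refine le_trans ?_ (le_reg φ hb (ε := ε / 2) (by positivity))
  refine hφ.loss' ha (pos_nonneg hb _) (κ := ε / 2) (by positivity) (by linarith) fun h hh => ?_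
  exact (conj_mono hh hab).trans (H_of_norm hb (pos_nonneg hb _) (norm_sub_pos hb (by positivity)) h hh)

theorem le_reg_of_lsc {φ : R → ℝ≥0∞} (hl : LowerSemicontinuousOn φ {a : R | 0 ≤ a}) {a : R}
    (ha : 0 ≤ a) : φ a ≤ reg φ a := by
  refine le_of_forall_lt fun c hc => ?_
  have h1 := hl a ha c hc
  rw [eventually_nhdsWithin_iff, Metric.eventually_nhds_iff] at h1
  obtain ⟨δ, hδ, h2⟩ := h1
  refine (h2 (y := pos (δ / 2) a) ?_ (pos_nonneg ha _)).trans_le (le_reg φ ha (by positivity))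
  rw [dist_comm, dist_eq_norm]
  exact (norm_sub_pos ha (by positivity)).trans_lt (by linarith)

theorem lsc_mono {φ : R → ℝ≥0∞} (hφ : PreQT φ) (hl : LowerSemicontinuousOn φ {a : R | 0 ≤ a})
    {a b : R} (ha : 0 ≤ a) (hab : a ≤ b) : φ a ≤ φ b :=
  (le_reg_of_lsc hl ha).trans ((hφ.reg_mono ha hab).trans (hφ.reg_le (ha.trans hab)))

theorem sharp {φ : R → ℝ≥0∞} (hφ : PreQT φ) {m c : R} (hm : 0 ≤ m) (hmc : m ≤ c)
    (hcomm : m * c = c * m) {η : ℝ} (hη : 0 < η) (hp : fEps η c * m = m) : φ m ≤ reg φ c := by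
  have hc := hm.trans hmc
  set p := fEps η c with hpd
  have hps : star p = p := fEps_star _ _
  have hmp : m * p = m := by
    have := congrArg star hp
    rwa [star_mul, hps, sa_of_nonneg hm] at this
  refine scale_lim fun θ h0 h1 => ?_
  rw [← hφ.smul θ m h0 hm]
  set s := (1 - θ) * η / 2 with hs
  have hs0 : 0 < s := by rw [hs]; have : 0 < 1 - θ := by linarith
                         positivity
  refine le_trans ?_ (le_reg φ hc hs0)
  refine hφ.mono_comm (smul_nonneg h0.le hm) ?_ ?_
  · have h2 : m ≤ p * c * p := by
      have := conj_mono hps hmc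
      rwa [hp, hmp] at this
    have h3 : θ • (p * c * p) ≤ pos s c := by
      have hcc := cutoff_cont η
      have hc0 := cutoff_zero η
      rw [hpd, fEps, c_mul_id hcc hc0 hc, c_mul (by fun_prop) (by simp) hcc hc0,
        c_smul (by fun_prop) (by simp)]
      refine c_mono hc (by fun_prop) (by simp) (by fun_prop) (posf_zero hs0.le) fun t ht => ?_
      rcases le_total t (η / 2) with h | h
      · rw [cutoff_eq_zero hη h]; simp
      · refine le_trans ?_ (le_max_left _ _)
        have a1 := cutoff_nonneg η t
        have a2 := cutoff_le_one η t
        have a3 : cutoff η t * cutoff η t ≤ 1 := by nlinarith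
        have a4 : θ * (cutoff η t * t * cutoff η t) ≤ θ * t := by
          have : t * (cutoff η t * cutoff η t) ≤ t * 1 := by gcongr
          gcongr; linarith
        nlinarith
    exact (smul_le_smul_of_nonneg_left h2 h0.le).trans h3
  · rw [smul_mul_assoc, mul_smul_comm, pos, c_commute hcomm.symm]

end PreQT

theorem cut_absorb {a c : R} (ha : 0 ≤ a) (hac : a ≤ c) (hcomm : a * c = c * a) {η : ℝ}
    (hη : 0 < η) : fEps η c * fEps (4 * η) a = fEps (4 * η) a := by
  have hc := ha.trans hac
  set f : ℝ → ℝ := fun t => √η * cutoff (4 * η) t with hf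
  have hcc := cutoff_cont (4 * η)
  have hfc : Continuous f := by simp only [hf]; fun_prop
  have hf0 : f 0 = 0 := by simp [hf, cutoff_zero]
  set r := cfcₙ f a with hr
  have hrs : star r = r := c_star _ _
  have hrf : r = √η • fEps (4 * η) a := by
    rw [hr, fEps, c_smul hcc (cutoff_zero _)]
  have hsη : √η * √η = η := Real.mul_self_sqrt hη.le
  have hrr : r * r ≤ c := by
    refine le_trans ?_ hac
    conv_rhs => rw [← c_id ha]
    rw [hr, c_mul hfc hf0 hfc hf0]
    refine c_mono ha (by fun_prop) (by simp [hf0]) (by fun_prop) rfl fun t ht => ?_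
    have a1 := cutoff_nonneg (4 * η) t
    have a2 := cutoff_le_one (4 * η) t
    have a3 : cutoff (4 * η) t * cutoff (4 * η) t ≤ 1 := by nlinarith
    rcases le_total t (4 * η / 2) with h | h
    · simp only [hf, cutoff_eq_zero (by positivity) h]; simpa using ht
    · have : f t * f t = η * (cutoff (4 * η) t * cutoff (4 * η) t) := by
        simp only [hf]; linear_combination (cutoff (4 * η) t * cutoff (4 * η) t) * hsη
      rw [this]; nlinarith
  have key : ∀ s : ℝ, 0 < s → s ≤ η → fEps s c * r = fEps η c * r := by
    intro s hs hsη'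
    set G : ℝ → ℝ := fun t => cutoff s t - cutoff η t with hG
    have hG1 := cutoff_cont s
    have hG2 := cutoff_cont η
    have hGc : Continuous G := by simp only [hG]; fun_prop
    have hG0 : G 0 = 0 := by simp [hG, cutoff_zero]
    set K := cfcₙ G c with hK
    have hKs : star K = K := c_star _ _
    have hKf : K = fEps s c - fEps η c := by
      rw [hK, fEps, fEps, c_sub hG1 (cutoff_zero _) hG2 (cutoff_zero _)]
    have hKr : K * r = r * K := by
      have h1 : r * c = c * r := c_commute hcomm _
      exact c_commute h1.symm _
    have b1 : K * c * K ≤ η • (K * K) := by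
      rw [hK, c_mul_id hGc hG0 hc, c_mul (by fun_prop) (by simp) hGc hG0, c_mul hGc hG0 hGc hG0,
        c_smul (by fun_prop) (by simp [hG0])]
      refine c_mono hc (by fun_prop) (by simp) (by fun_prop) (by simp [hG0]) fun t ht => ?_
      rcases le_total η t with h | h
      · have : G t = 0 := by
          simp only [hG]; rw [cutoff_eq_one hη h, cutoff_eq_one hs (by linarith)]; simp
        simp [this]
      · nlinarith [mul_self_nonneg (G t)]
    have b2 : (2 * η) • (r * r) ≤ r * a * r := by
      refine conj_lower ha hfc hf0 fun t ht => ?_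
      rcases le_total t (4 * η / 2) with h | h
      · simp [hf, cutoff_eq_zero (show 0 < 4 * η by positivity) h]
      · nlinarith [mul_self_nonneg (f t)]
    have b3 : (2 * η) • (r * r) ≤ r * c * r := b2.trans (conj_mono hrs hac)
    have b4 := conj_mono hKs b3
    have b5 := conj_mono hrs b1
    rw [mul_smul_comm, smul_mul_assoc] at b4 b5
    have c1 : K * (r * c * r) * K = r * (K * c * K) * r := by
      calc K * (r * c * r) * K = (K * r) * c * (r * K) := by noncomm_ring
        _ = (r * K) * c * (K * r) := by rw [hKr]
        _ = _ := by noncomm_ring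
    have c2 : K * (r * r) * K = r * (K * K) * r := by
      calc K * (r * r) * K = (K * r) * (r * K) := by noncomm_ring
        _ = (r * K) * (K * r) := by rw [hKr]
        _ = _ := by noncomm_ring
    rw [c1, c2] at b4
    have b6 := b4.trans b5
    have b7 : η • (r * (K * K) * r) ≤ 0 := by
      rw [two_mul, add_smul] at b6
      simpa using b6
    have b8 : r * (K * K) * r = star (K * r) * (K * r) := by
      rw [star_mul, hKs, hrs]; noncomm_ring
    have b9 : (0 : R) ≤ r * (K * K) * r := by rw [b8]; exact star_mul_self_nonneg _
    have b10 : η • (r * (K * K) * r) = 0 := le_antisymm b7 (smul_nonneg hη.le b9)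
    have b11 : star (K * r) * (K * r) = 0 := by
      rw [← b8]; exact (smul_eq_zero.1 b10).resolve_left hη.ne'
    have b12 : K * r = 0 := CStarRing.star_mul_self_eq_zero_iff _ |>.1 b11
    rw [hKf, sub_mul] at b12
    exact sub_eq_zero.1 b12
  have hlim : r - fEps η c * r = 0 := by
    rw [← norm_le_zero_iff]
    have : ∀ s : ℝ, 0 < s → s ≤ η → ‖r - fEps η c * r‖ * ‖r - fEps η c * r‖ ≤ s := by
      intro s hs hs'
      rw [← key s hs hs']
      exact norm_sub_fEps_mul hrs hc hrr hs
    by_contra hne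
    push Not at hne
    have h1 : 0 < ‖r - fEps η c * r‖ * ‖r - fEps η c * r‖ := by positivity
    have h2 := this (min η (‖r - fEps η c * r‖ * ‖r - fEps η c * r‖ / 2)) (by positivity)
      (min_le_left _ _)
    have := h2.trans (min_le_right _ _)
    linarith
  rw [hrf, mul_smul_comm, ← smul_sub] at hlim
  have := (smul_eq_zero.1 hlim).resolve_left (Real.sqrt_pos.2 hη).ne'
  exact (sub_eq_zero.1 this).symm

theorem fEps_mul_pos {a : R} {ε : ℝ} (hε : 0 < ε) : fEps ε a * pos ε a = pos ε a := by
  rw [fEps, pos, c_mul (cutoff_cont _) (cutoff_zero _) (g := fun t => max (t - ε) 0)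
    (by fun_prop) (posf_zero hε.le)]
  congr 1; ext t
  rcases le_total t ε with h | h
  · rw [max_eq_right (by linarith)]; simp
  · rw [cutoff_eq_one hε h]; simp

theorem pos_tr (φ : R → ℝ≥0∞) (hφ : PreQT φ) (x : R) {ε : ℝ} (hε : 0 < ε) :
    φ (pos ε (star x * x)) = φ (pos ε (x * star x)) := by
  set g : ℝ → ℝ := fun t => √(max (t - ε) 0) / √(max t ε) with hg
  have hgc : Continuous g := by
    refine Continuous.div (by fun_prop) (by fun_prop) fun t => ?_
    have : 0 < max t ε := lt_max_of_lt_right hε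
    positivity
  have hg0 : g 0 = 0 := by simp only [hg]; rw [posf_zero hε.le]; simp
  have hgg : ∀ t, 0 ≤ t → g t * t * g t = max (t - ε) 0 := by
    intro t ht
    simp only [hg]
    rcases le_total t ε with h | h
    · rw [max_eq_right (by linarith : t - ε ≤ 0)]; simp
    · rw [max_eq_left h, max_eq_left (by linarith : (0:ℝ) ≤ t - ε)]
      have h1 : 0 < √t := Real.sqrt_pos.2 (by linarith)
      field_simp
      rw [Real.sq_sqrt (by linarith), Real.sq_sqrt ht]; ring
  have hu : 0 ≤ star x * x := star_mul_self_nonneg x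
  have hv : 0 ≤ x * star x := mul_star_self_nonneg x
  have key : ∀ w : R, 0 ≤ w → cfcₙ g w * w * cfcₙ g w = pos ε w := by
    intro w hw
    rw [c_mul_id hgc hg0 hw, c_mul (by fun_prop) (by simp) hgc hg0, pos]
    exact c_congr hw hgg
  have e1 : star (x * cfcₙ g (star x * x)) * (x * cfcₙ g (star x * x)) = pos ε (star x * x) := by
    rw [← key _ hu, star_mul, c_star]; noncomm_ring
  have e2 : (x * cfcₙ g (star x * x)) * star (x * cfcₙ g (star x * x)) = pos ε (x * star x) := by
    rw [intertwine hgc hg0, ← key _ hv, star_mul, c_star]; noncomm_ring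
  rw [← e1, hφ.tr, e2]

theorem pos_smul {a : R} (ha : 0 ≤ a) {r ε : ℝ} (hr : 0 < r) (hε : 0 < ε) :
    pos ε (r • a) = r • pos (ε / r) a := by
  rw [pos, pos, c_smul (f := fun t => max (t - ε / r) 0) (by fun_prop) (posf_zero (by positivity)),
    ← cfcₙ_comp_const_mul r (fun t : ℝ => max (t - ε) 0) a (by fun_prop) (posf_zero hε.le)
      (IsSelfAdjoint.of_nonneg ha)]
  congr 1; ext t
  rw [mul_max_of_nonneg _ _ hr.le, mul_sub, mul_div_cancel₀ _ hr.ne', mul_zero]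

theorem PreQT.reg_pre {φ : R → ℝ≥0∞} (hφ : PreQT φ) : PreQT (reg φ) where
  zero := by
    refine le_antisymm (reg_le_of le_rfl fun ε hε => ?_) bot_le
    rw [pos, cfcₙ_apply_zero, hφ.zero]
  smul r a hr ha := by
    have key : ∀ (r : ℝ) (a : R), 0 < r → 0 ≤ a → reg φ (r • a) ≤ ENNReal.ofReal r * reg φ a := by
      intro r a hr ha
      refine reg_le_of (smul_nonneg hr.le ha) fun ε hε => ?_
      rw [pos_smul ha hr hε, hφ.smul _ _ hr (pos_nonneg ha _)]
      gcongr
      exact le_reg φ ha (by positivity)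
    refine le_antisymm (key r a hr ha) ?_
    have h1 := key r⁻¹ (r • a) (by positivity) (smul_nonneg hr.le ha)
    rw [smul_smul, inv_mul_cancel₀ hr.ne', one_smul] at h1
    calc ENNReal.ofReal r * reg φ a ≤ ENNReal.ofReal r * (ENNReal.ofReal r⁻¹ * reg φ (r • a)) := by
          gcongr
      _ = reg φ (r • a) := by
        rw [← mul_assoc, ← ENNReal.ofReal_mul hr.le, mul_inv_cancel₀ hr.ne']; simp
  add a b ha hb hab := by
    have hc := add_nonneg ha hb
    have hpp : ∀ ε δ : ℝ, pos ε a * pos δ b = pos δ b * pos ε a := by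
      intro ε δ
      refine c_commute ?_ _
      exact (c_commute hab.symm _).symm
    refine le_antisymm (reg_le_of hc fun ε hε => ?_) ?_
    · have h1 : φ (pos ε (a + b)) ≤ φ (pos (ε / 4) a + pos (ε / 4) b) := by
        refine hφ.loss' hc (add_nonneg (pos_nonneg ha _) (pos_nonneg hb _)) (κ := ε / 2)
          (by positivity) (by linarith)
          (H_of_norm hc (add_nonneg (pos_nonneg ha _) (pos_nonneg hb _)) ?_)
        have : a + b - (pos (ε / 4) a + pos (ε / 4) b)
          = (a - pos (ε / 4) a) + (b - pos (ε / 4) b) := by abel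
        rw [this]
        have n1 := norm_sub_pos ha (ε := ε / 4) (by positivity)
        have n2 := norm_sub_pos hb (ε := ε / 4) (by positivity)
        exact (norm_add_le _ _).trans (by linarith)
      rw [hφ.add _ _ (pos_nonneg ha _) (pos_nonneg hb _) (hpp _ _)] at h1
      exact h1.trans (add_le_add (le_reg φ ha (by positivity)) (le_reg φ hb (by positivity)))
    · have main : ∀ ε : ℝ, 0 < ε → φ (pos ε a) + φ (pos ε b) ≤ reg φ (a + b) := by
        intro ε hε
        rw [← hφ.add _ _ (pos_nonneg ha _) (pos_nonneg hb _) (hpp _ _)]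
        have e4 : 4 * (ε / 4) = ε := by ring
        refine hφ.sharp (add_nonneg (pos_nonneg ha _) (pos_nonneg hb _))
          (add_le_add (pos_le ha hε.le) (pos_le hb hε.le)) ?_ (η := ε / 4) (by positivity) ?_
        · have h1 : pos ε a * (a + b) = (a + b) * pos ε a :=
            c_commute (by rw [mul_add, add_mul, hab]) _
          have h2 : pos ε b * (a + b) = (a + b) * pos ε b :=
            c_commute (by rw [mul_add, add_mul, hab]) _
          rw [add_mul (pos ε a), mul_add (a + b), h1, h2]
        · have h1 := cut_absorb (η := ε / 4) ha (le_add_of_nonneg_right hb : a ≤ a + b)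
            (by rw [mul_add, add_mul, hab]) (by positivity)
          have h2 := cut_absorb (η := ε / 4) hb (le_add_of_nonneg_left ha : b ≤ a + b)
            (by rw [mul_add, add_mul, hab]) (by positivity)
          rw [e4] at h1 h2
          rw [mul_add, ← fEps_mul_pos (a := a) hε, ← fEps_mul_pos (a := b) hε, ← mul_assoc,
            ← mul_assoc, h1, h2]
      conv_lhs => rw [reg, reg, if_pos ha, if_pos hb]
      refine ENNReal.iSup_add_iSup_le fun ε δ => ?_
      have hmin : 0 < min ε.1 δ.1 := lt_min ε.2 δ.2
      refine le_trans (add_le_add ?_ ?_) (main _ hmin)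
      · exact hφ.mono_fun ha (by fun_prop) (posf_zero ε.2.le) (by fun_prop) (posf_zero hmin.le)
          (fun t _ => le_max_right _ _)
          fun t _ => max_le_max (sub_le_sub_left (min_le_left _ _) _) le_rfl
      · exact hφ.mono_fun hb (by fun_prop) (posf_zero δ.2.le) (by fun_prop) (posf_zero hmin.le)
          (fun t _ => le_max_right _ _)
          fun t _ => max_le_max (sub_le_sub_left (min_le_right _ _) _) le_rfl
  tr x := by
    rw [reg, reg, if_pos (star_mul_self_nonneg x), if_pos (mul_star_self_nonneg x)]
    exact iSup_congr fun ε => pos_tr φ hφ x ε.2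

theorem PreQT.reg_lsc {φ : R → ℝ≥0∞} (hφ : PreQT φ) :
    LowerSemicontinuousOn (reg φ) {a : R | 0 ≤ a} := by
  intro a ha c hc
  have ha' : 0 ≤ a := ha
  rw [reg, if_pos ha'] at hc
  obtain ⟨ε, hε⟩ := lt_iSup_iff.1 hc
  have hε0 := ε.2
  rw [eventually_nhdsWithin_iff, Metric.eventually_nhds_iff]
  refine ⟨ε / 4, by positivity, fun y hy hy0 => ?_⟩
  have hy0' : 0 ≤ y := hy0
  refine hε.trans_le (le_trans ?_ (le_reg φ hy0' (ε := ε / 2) (by positivity)))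
  refine hφ.loss' ha' (pos_nonneg hy0' _) (κ := 3 * ε / 4) (by positivity) (by linarith)
    (H_of_norm ha' (pos_nonneg hy0' _) ?_)
  rw [dist_comm, dist_eq_norm] at hy
  have : a - pos (ε / 2) y = (a - y) + (y - pos (ε / 2) y) := by abel
  rw [this]
  have n1 := norm_sub_pos hy0' (ε := ε.1 / 2) (by positivity)
  exact (norm_add_le _ _).trans (by linarith)

theorem PreQT.reg_fEps {φ : R → ℝ≥0∞} (hφ : PreQT φ) {a : R} (ha : 0 ≤ a) {ε : ℝ} (hε : 0 < ε) :
    φ (fEps ε a) ≤ reg φ (fEps (ε / 2) a) := by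
  refine hφ.sharp (fEps_nonneg ha _) (fEps_anti ha (by positivity) (by linarith))
    (c_comm _ _ _) one_pos ?_
  have : fEps 1 (fEps (ε / 2) a) = cfcₙ (fun t => cutoff 1 (cutoff (ε / 2) t)) a :=
    (cfcₙ_comp' (cutoff 1) (cutoff (ε / 2)) a (cutoff_cont _).continuousOn (cutoff_zero _)
      (cutoff_cont _).continuousOn (cutoff_zero _) (IsSelfAdjoint.of_nonneg ha)).symm
  have hc1 := cutoff_cont 1
  have hc2 := cutoff_cont (ε / 2)
  rw [this, fEps, c_mul (by fun_prop) (by simp [cutoff_zero]) (cutoff_cont _) (cutoff_zero _)]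
  congr 1; ext t
  rcases le_total t (ε / 2) with h | h
  · rw [cutoff_eq_zero hε h]; simp
  · rw [cutoff_eq_one (by positivity) h, cutoff_eq_one one_pos le_rfl]; simp

/-! ### Two-by-two matrices -/

def M2 (R : Type*) := CStarMatrix (Fin 2) (Fin 2) R

instance : NonUnitalCStarAlgebra (M2 R) :=
  inferInstanceAs (NonUnitalCStarAlgebra (CStarMatrix (Fin 2) (Fin 2) R))
instance : PartialOrder (M2 R) := inferInstanceAs (PartialOrder (CStarMatrix (Fin 2) (Fin 2) R))
instance : StarOrderedRing (M2 R) :=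
  inferInstanceAs (StarOrderedRing (CStarMatrix (Fin 2) (Fin 2) R))

def mk2 (a b c d : R) : M2 R := CStarMatrix.ofMatrix !![a, b; c, d]

theorem mk2_mul (a b c d a' b' c' d' : R) : mk2 a b c d * mk2 a' b' c' d' =
    mk2 (a * a' + b * c') (a * b' + b * d') (c * a' + d * c') (c * b' + d * d') := by
  have : ∀ x y : CStarMatrix (Fin 2) (Fin 2) R, ∀ i j, (x * y) i j = x i 0 * y 0 j + x i 1 * y 1 j
    := by intro x y i j; rw [CStarMatrix.mul_apply, Fin.sum_univ_two]
  refine CStarMatrix.ext fun i j => (this _ _ i j).trans ?_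
  fin_cases i <;> fin_cases j <;> rfl

theorem mk2_star (a b c d : R) : star (mk2 a b c d) = mk2 (star a) (star c) (star b) (star d) := by
  refine CStarMatrix.ext fun i j => ?_
  fin_cases i <;> fin_cases j <;> rfl

theorem mk2_add (a b c d a' b' c' d' : R) : mk2 a b c d + mk2 a' b' c' d' =
    mk2 (a + a') (b + b') (c + c') (d + d') := by
  refine CStarMatrix.ext fun i j => ?_
  fin_cases i <;> fin_cases j <;> rfl

theorem mk2_csmul (r : ℂ) (a b c d : R) : r • mk2 a b c d =
    mk2 (r • a) (r • b) (r • c) (r • d) := by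
  refine CStarMatrix.ext fun i j => ?_
  fin_cases i <;> fin_cases j <;> rfl

theorem mk2_smul (r : ℝ) (a b c d : R) : r • mk2 a b c d =
    mk2 (r • a) (r • b) (r • c) (r • d) :=
  mk2_csmul (r : ℂ) a b c d

theorem mk2_zero : mk2 (0 : R) 0 0 0 = 0 := by
  refine CStarMatrix.ext fun i j => ?_
  fin_cases i <;> fin_cases j <;> rfl

def ent (x : M2 R) (i j : Fin 2) : R := CStarMatrix.ofMatrix.symm x i j

theorem mk2_eta (x : M2 R) : x = mk2 (ent x 0 0) (ent x 0 1) (ent x 1 0) (ent x 1 1) := by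
  refine CStarMatrix.ext fun i j => ?_
  fin_cases i <;> fin_cases j <;> rfl

theorem mk2_00 (a b c d : R) : ent (mk2 a b c d) 0 0 = a := rfl

/-- upper left corner -/
def corner : R →⋆ₙₐ[ℂ] M2 R where
  toFun a := mk2 a 0 0 0
  map_smul' r a := by simp [mk2_csmul]
  map_zero' := mk2_zero
  map_add' a b := by simp [mk2_add]
  map_mul' a b := by simp [mk2_mul]
  map_star' a := by simp [mk2_star]

theorem corner_apply (a : R) : corner a = mk2 a 0 0 0 := rfl

theorem sqrt_data {b : R} (hb : 0 ≤ b) : ∃ k : R, star k = k ∧ k * k = b :=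
  ⟨CFC.sqrt b, sa_of_nonneg (CFC.sqrt_nonneg b), CFC.sqrt_mul_sqrt_self b hb⟩

theorem corner_nonneg {a : R} (ha : 0 ≤ a) : 0 ≤ corner a := by
  obtain ⟨k, hk, rfl⟩ := sqrt_data ha
  rw [map_mul]
  exact hsq_nonneg (by rw [← map_star, hk])

theorem nonneg_of_corner {a : R} (ha : 0 ≤ corner a) : 0 ≤ a := by
  obtain ⟨y, hy⟩ := CStarAlgebra.nonneg_iff_eq_star_mul_self.1 ha
  rw [mk2_eta y, mk2_star, mk2_mul] at hy
  have := congrArg (fun m : M2 R => ent m 0 0) hy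
  simp only [corner_apply, mk2_00] at this
  rw [this]
  exact add_nonneg (star_mul_self_nonneg _) (star_mul_self_nonneg _)

theorem continuous_hom {S : Type*} [NonUnitalCStarAlgebra S] (f : R →⋆ₙₐ[ℂ] S) :
    Continuous f :=
  AddMonoidHomClass.continuous_of_bound f 1 fun x => by
    rw [one_mul]; exact NonUnitalStarAlgHom.norm_apply_le f x

theorem corner_pos {a : R} (ha : 0 ≤ a) {ε : ℝ} (hε : 0 < ε) :
    pos ε (corner a) = corner (pos ε a) := by
  have := (IsSelfAdjoint.of_nonneg ha)
  refine (NonUnitalStarAlgHom.map_cfcₙ (S := ℂ) (corner : R →⋆ₙₐ[ℂ] M2 R) (fun t : ℝ => max (t - ε) 0) a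
    (by fun_prop) (posf_zero hε.le) ?_ this (this.map corner)).symm
  exact continuous_hom _

/-- extension data -/
structure Ext (φ : R → ℝ≥0∞) (σ : M2 R → ℝ≥0∞) : Prop where
  pre : PreQT φ
  pre2 : PreQT σ
  compat : ∀ a, σ (corner a) = φ a

theorem Ext.reg {φ : R → ℝ≥0∞} {σ : M2 R → ℝ≥0∞} (h : Ext φ σ) : Ext (reg φ) (reg σ) where
  pre := h.pre.reg_pre
  pre2 := h.pre2.reg_pre
  compat a := by
    by_cases ha : 0 ≤ a
    · rw [Paper.reg, Paper.reg, if_pos ha, if_pos (corner_nonneg ha)]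
      congr 1; ext ε
      rw [corner_pos ha ε.2, h.compat]
    · rw [Paper.reg, Paper.reg, if_neg ha, if_neg (fun h => ha (nonneg_of_corner h))]

theorem mk2_diag_nonneg {x y : R} (hx : 0 ≤ x) (hy : 0 ≤ y) : 0 ≤ mk2 x 0 0 y := by
  obtain ⟨k, hk, rfl⟩ := sqrt_data hx
  obtain ⟨l, hl, rfl⟩ := sqrt_data hy
  have := hsq_nonneg (h := mk2 k 0 0 l) (by simp [mk2_star, hk, hl])
  simpa [mk2_mul] using this

theorem Ext.diag {φ : R → ℝ≥0∞} {σ : M2 R → ℝ≥0∞} (h : Ext φ σ) {x y : R} (hx : 0 ≤ x)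
    (hy : 0 ≤ y) : σ (mk2 x 0 0 y) = φ x + φ y := by
  have e : mk2 x 0 0 y = mk2 x 0 0 0 + mk2 0 0 0 y := by simp [mk2_add]
  rw [e, h.pre2.add _ _ (mk2_diag_nonneg hx le_rfl) (mk2_diag_nonneg le_rfl hy)
    (by simp [mk2_mul]), ← corner_apply, h.compat]
  congr 1
  obtain ⟨k, hk, rfl⟩ := sqrt_data hy
  have := h.pre2.tr (mk2 0 k 0 0)
  simp only [mk2_star, mk2_mul, hk, star_zero, mul_zero, zero_mul, add_zero, zero_add] at this
  rw [this, ← corner_apply, h.compat]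

theorem Ext.add_le {φ : R → ℝ≥0∞} {σ : M2 R → ℝ≥0∞} (h : Ext φ σ)
    (hl : LowerSemicontinuousOn φ {a : R | 0 ≤ a}) {x y : R} (hx : 0 ≤ x) (hy : 0 ≤ y) :
    φ (x + y) ≤ 2 * (φ x + φ y) := by
  refine (PreQT.le_reg_of_lsc hl (add_nonneg hx hy)).trans (reg_le_of (add_nonneg hx hy) ?_)
  intro ε hε
  rw [← h.compat, ← corner_pos (add_nonneg hx hy) hε]
  have hd := mk2_diag_nonneg hx hy
  have h2 : (2 : ℝ≥0∞) * (φ x + φ y) = σ ((2 : ℝ) • mk2 x 0 0 y) := by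
    rw [h.pre2.smul _ _ two_pos hd, h.diag hx hy]; norm_num
  rw [h2]
  obtain ⟨k, hk, rfl⟩ := sqrt_data hx
  obtain ⟨l, hl, rfl⟩ := sqrt_data hy
  have e1 : corner (k * k + l * l) = mk2 k l 0 0 * star (mk2 k l 0 0) := by
    simp [corner_apply, mk2_star, mk2_mul, hk, hl]
  rw [e1, ← pos_tr σ h.pre2 _ hε]
  refine h.pre2.loss' (star_mul_self_nonneg _) (smul_nonneg zero_le_two hd) le_rfl hε
    (mono_H ?_)
  rw [← sub_nonneg]
  have := star_mul_self_nonneg (mk2 k (-l) 0 0)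
  have e2 : (2 : ℝ) • mk2 (k * k) 0 0 (l * l) - star (mk2 k l 0 0) * mk2 k l 0 0 =
      star (mk2 k (-l) 0 0) * mk2 k (-l) 0 0 := by
    rw [sub_eq_iff_eq_add]
    simp [mk2_star, mk2_mul, mk2_add, hk, hl, two_smul]
  rwa [e2]

theorem fEps_sqrt {a : R} (ha : 0 ≤ a) {δ : ℝ} (hδ : 0 < δ) : ∃ h : R, star h = h ∧
    h * h = fEps δ a ∧ ‖h‖ ≤ 1 ∧ (δ / 2) • (h * h) ≤ h * a * h := by
  have hc := cutoff_cont δ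
  have h0 : √(cutoff δ 0) = 0 := by rw [cutoff_zero, Real.sqrt_zero]
  refine ⟨cfcₙ (fun t => √(cutoff δ t)) a, c_star _ _, ?_, ?_, ?_⟩
  · rw [c_mul (by fun_prop) h0 (by fun_prop) h0, fEps]
    congr 1; ext t
    exact Real.mul_self_sqrt (cutoff_nonneg _ _)
  · refine c_norm_le ha fun t ht => ?_
    rw [abs_of_nonneg (Real.sqrt_nonneg _)]
    exact Real.sqrt_le_one.2 (cutoff_le_one _ _)
  · refine conj_lower ha (by fun_prop) h0 fun t ht => ?_
    rcases le_total t (δ / 2) with h | h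
    · simp [cutoff_eq_zero hδ h]
    · have : 0 ≤ √(cutoff δ t) * √(cutoff δ t) := by positivity
      nlinarith

theorem Ext.D_add {φ : R → ℝ≥0∞} {σ : M2 R → ℝ≥0∞} (H : Ext φ σ) {x y : R} (hx : 0 ≤ x)
    (hy : 0 ≤ y) : D φ (x + y) ≤ D φ x + D φ y := by
  have hxy := add_nonneg hx hy
  refine iSup_le fun n => ?_
  set δ : ℝ := 1 / (n + 1) with hδd
  have hδ : 0 < δ := by positivity
  obtain ⟨h, hs, hh, hn, hlow⟩ := fEps_sqrt hxy hδ
  rw [← hh]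
  obtain ⟨k, hk, hkk⟩ := sqrt_data hx
  obtain ⟨l, hl, hll⟩ := sqrt_data hy
  set p := fEps (δ / 8) x
  set q := fEps (δ / 8) y
  set e := fEps (δ / 16) x
  set f := fEps (δ / 16) y
  have hp : star p = p := fEps_star _ _
  have hq : star q = q := fEps_star _ _
  have he : star e = e := fEps_star _ _
  have hf : star f = f := fEps_star _ _
  have hep : e * p = p := fEps_mul (by positivity) (by linarith)
  have hfq : f * q = q := fEps_mul (by positivity) (by linarith)
  have hkp : k * p = p * k := (c_commute (by rw [← hkk, mul_assoc]) _).symm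
  have hlq : l * q = q * l := (c_commute (by rw [← hll, mul_assoc]) _).symm
  have hX : h * x * h ≤ h * (p * x * p) * h + (δ / 8) • (h * h) :=
    H_of_norm hx (by have := star_left_conjugate_nonneg hx p; rwa [hp] at this)
      (norm_sub_conj_fEps hx (by positivity)) h hs
  have hY : h * y * h ≤ h * (q * y * q) * h + (δ / 8) • (h * h) :=
    H_of_norm hy (by have := star_left_conjugate_nonneg hy q; rwa [hq] at this)
      (norm_sub_conj_fEps hy (by positivity)) h hs
  have key : (δ / 4) • (h * h) ≤ h * (p * x * p) * h + h * (q * y * q) * h := by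
    have h1 : (δ / 2) • (h * h) ≤ (h * (p * x * p) * h + (δ / 8) • (h * h)) +
        (h * (q * y * q) * h + (δ / 8) • (h * h)) := by
      refine hlow.trans ?_
      rw [mul_add, add_mul]
      exact add_le_add hX hY
    have e1 : (δ / 2) • (h * h) = (δ / 4) • (h * h) + ((δ / 8) • (h * h) + (δ / 8) • (h * h)) := by
      rw [← add_smul, ← add_smul]; congr 1; ring
    rw [e1, add_add_add_comm] at h1
    exact le_of_add_le_add_right h1
  have hc := H.pre2.core (h := corner h) (z := mk2 (k * p * h) 0 (l * q * h) 0)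
    (e := mk2 e 0 0 f) (c := δ / 4) (by rw [← map_star, hs])
    ((NonUnitalStarAlgHom.norm_apply_le _ _).trans hn) (by positivity) ?_
    (by simp [mk2_star, he, hf]) ?_
  · rw [← map_mul, H.compat] at hc
    refine hc.trans ?_
    have : mk2 e 0 0 f * mk2 e 0 0 f = mk2 (e * e) 0 0 (f * f) := by simp [mk2_mul]
    rw [this, H.diag (hsq_nonneg he) (hsq_nonneg hf)]
    have aux : ∀ z : R, 0 ≤ z → φ (fEps (δ / 16) z * fEps (δ / 16) z) ≤ D φ z := by
      intro z hz
      refine le_trans ?_ (H.pre.le_D hz (ε := δ / 16) (by positivity))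
      rw [fEps, c_mul (cutoff_cont _) (cutoff_zero _) (cutoff_cont _) (cutoff_zero _)]
      refine H.pre.mono_fun hz ((cutoff_cont _).mul (cutoff_cont _)) (by simp [cutoff_zero])
        (cutoff_cont _) (cutoff_zero _)
        (fun t _ => mul_nonneg (cutoff_nonneg _ _) (cutoff_nonneg _ _)) fun t ht => ?_
      nlinarith [cutoff_nonneg (δ / 16) t, cutoff_le_one (δ / 16) t]
    exact add_le_add (aux x hx) (aux y hy)
  · have e2 : star (mk2 (k * p * h) 0 (l * q * h) 0) * mk2 (k * p * h) 0 (l * q * h) 0 =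
        corner (h * (p * x * p) * h + h * (q * y * q) * h) := by
      simp only [mk2_star, mk2_mul, corner_apply, star_mul, hs, hk, hl, hp, hq, star_zero,
        mul_zero, zero_mul, add_zero]
      simp only [← hkk, ← hll, mul_assoc]
    rw [e2, ← map_mul]
    have : (δ / 4) • corner (h * h) = corner ((δ / 4) • (h * h)) := by
      simp [corner_apply, mk2_smul]
    rw [this, ← sub_nonneg, ← map_sub]
    exact corner_nonneg (sub_nonneg.2 key)
  · simp only [mk2_mul, mul_zero, zero_mul, add_zero, zero_add]
    rw [hkp, hlq, mul_assoc p, ← mul_assoc e, hep, mul_assoc q, ← mul_assoc f, hfq]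

/-! ### Quasitraces and extensions -/

theorem corner_eq (a : R) :
    (fun i j => if i = 0 ∧ j = 0 then a else 0 : Matrix (Fin 2) (Fin 2) R) =
      CStarMatrix.ofMatrix.symm (corner a : M2 R) := by
  funext i j
  fin_cases i <;> fin_cases j <;> rfl

theorem QuasiTrace.pre (τ : QuasiTrace R) : PreQT τ.toFun where
  zero := τ.map_zero
  smul := τ.map_smul
  add := τ.map_add_of_commute
  tr := τ.map_star_mul_self

theorem ofM_mul (x y : Matrix (Fin 2) (Fin 2) R) :
    (CStarMatrix.ofMatrix (x * y) : M2 R) =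
      (CStarMatrix.ofMatrix x : M2 R) * (CStarMatrix.ofMatrix y : M2 R) := rfl

theorem ofM_star (x : Matrix (Fin 2) (Fin 2) R) :
    (CStarMatrix.ofMatrix (star x) : M2 R) = star (CStarMatrix.ofMatrix x : M2 R) := rfl

theorem ofM_add (x y : Matrix (Fin 2) (Fin 2) R) :
    (CStarMatrix.ofMatrix (x + y) : M2 R) =
      (CStarMatrix.ofMatrix x : M2 R) + (CStarMatrix.ofMatrix y : M2 R) := rfl

theorem ofM_smul (r : ℝ) (x : Matrix (Fin 2) (Fin 2) R) :
    (CStarMatrix.ofMatrix (r • x) : M2 R) = r • (CStarMatrix.ofMatrix x : M2 R) := rfl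

theorem QuasiTrace.ext (τ : QuasiTrace R) : ∃ σ : M2 R → ℝ≥0∞, Ext τ.toFun σ := by
  obtain ⟨σ, h1, h2, h3, h4, h5⟩ := τ.exists_matrix_extension
  refine ⟨fun x => σ (CStarMatrix.ofMatrix.symm x), τ.pre, ⟨h2, ?_, ?_, ?_⟩, ?_⟩
  · intro r a hr ha
    obtain ⟨y, hy⟩ := CStarAlgebra.nonneg_iff_eq_star_mul_self.1 ha
    exact h3 r _ hr ⟨CStarMatrix.ofMatrix.symm y, congrArg CStarMatrix.ofMatrix.symm hy⟩
  · intro a b ha hb hab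
    obtain ⟨y, hy⟩ := CStarAlgebra.nonneg_iff_eq_star_mul_self.1 ha
    obtain ⟨z, hz⟩ := CStarAlgebra.nonneg_iff_eq_star_mul_self.1 hb
    exact h4 _ _ ⟨CStarMatrix.ofMatrix.symm y, congrArg CStarMatrix.ofMatrix.symm hy⟩
      ⟨CStarMatrix.ofMatrix.symm z, congrArg CStarMatrix.ofMatrix.symm hz⟩
      (congrArg CStarMatrix.ofMatrix.symm hab)
  · intro x; exact h5 _
  · intro a
    rw [← corner_eq, h1]

/-- build a quasitrace from an extension pair -/
def Ext.toQT {φ : R → ℝ≥0∞} {σ : M2 R → ℝ≥0∞} (h : Ext φ σ)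
    (hl : LowerSemicontinuousOn φ {a : R | 0 ≤ a}) (h0 : ∀ a : R, ¬ (0 ≤ a) → φ a = 0)
    (hf : ∀ a ∈ pedersen R, 0 ≤ a → φ a < ∞) : QuasiTrace R where
  toFun := φ
  zero_of_not_nonneg := h0
  map_zero := h.pre.zero
  map_smul := h.pre.smul
  map_add_of_commute := h.pre.add
  map_star_mul_self := h.pre.tr
  lowerSemicontinuousOn := hl
  finite_on_pedersen := hf
  exists_matrix_extension := by
    refine ⟨fun x => σ (CStarMatrix.ofMatrix x : M2 R), ?_, h.pre2.zero, ?_, ?_, ?_⟩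
    · intro a
      rw [corner_eq]; exact h.compat a
    · rintro r x hr ⟨y, rfl⟩
      exact h.pre2.smul r _ hr (star_mul_self_nonneg (CStarMatrix.ofMatrix y : M2 R))
    · rintro x y ⟨u, rfl⟩ ⟨v, rfl⟩ hxy
      exact h.pre2.add _ _ (star_mul_self_nonneg (CStarMatrix.ofMatrix u : M2 R))
        (star_mul_self_nonneg (CStarMatrix.ofMatrix v : M2 R))
        (congrArg CStarMatrix.ofMatrix hxy)
    · intro x
      exact h.pre2.tr (CStarMatrix.ofMatrix x : M2 R)

theorem PreQT.scale {φ : R → ℝ≥0∞} (h : PreQT φ) (c : ℝ≥0∞) : PreQT (fun a => c * φ a) where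
  zero := by rw [h.zero, mul_zero]
  smul r a hr ha := by rw [h.smul r a hr ha, mul_left_comm]
  add a b ha hb hab := by rw [h.add a b ha hb hab, mul_add]
  tr x := by rw [h.tr]

theorem Ext.scale {φ : R → ℝ≥0∞} {σ : M2 R → ℝ≥0∞} (h : Ext φ σ) (c : ℝ≥0∞) :
    Ext (fun a => c * φ a) (fun a => c * σ a) :=
  ⟨h.pre.scale c, h.pre2.scale c, fun a => by rw [h.compat]⟩

theorem QuasiTrace.exists_scale (τ : QuasiTrace R) {c : ℝ≥0∞} (hc : c ≠ ∞) :
    ∃ τ' : QuasiTrace R, ∀ a, τ'.toFun a = c * τ.toFun a := by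
  obtain ⟨σ, h⟩ := τ.ext
  refine ⟨(h.scale c).toQT ?_ ?_ ?_, fun a => rfl⟩
  · exact (ENNReal.continuous_const_mul hc).comp_lowerSemicontinuousOn τ.lowerSemicontinuousOn
      (fun x y h => mul_le_mul_right h c)
  · intro a ha; rw [τ.zero_of_not_nonneg a ha, mul_zero]
  · intro a ha ha0; exact ENNReal.mul_lt_top hc.lt_top (τ.finite_on_pedersen a ha ha0)

theorem D_scale {φ ψ : R → ℝ≥0∞} {c : ℝ≥0∞} (h : ∀ a, ψ a = c * φ a) (a : R) :
    D ψ a = c * D φ a := by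
  rw [D, D, ENNReal.mul_iSup]; simp only [h]

theorem QuasiTrace.add_le (τ : QuasiTrace R) {x y : R} (hx : 0 ≤ x) (hy : 0 ≤ y) :
    τ.toFun (x + y) ≤ 2 * (τ.toFun x + τ.toFun y) := by
  obtain ⟨σ, h⟩ := τ.ext
  exact h.add_le τ.lowerSemicontinuousOn hx hy

theorem QuasiTrace.mono (τ : QuasiTrace R) {x y : R} (hx : 0 ≤ x) (hxy : x ≤ y) :
    τ.toFun x ≤ τ.toFun y := τ.pre.lsc_mono τ.lowerSemicontinuousOn hx hxy

theorem QuasiTrace.D_add (τ : QuasiTrace R) {x y : R} (hx : 0 ≤ x) (hy : 0 ≤ y) :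
    D τ.toFun (x + y) ≤ D τ.toFun x + D τ.toFun y := by
  obtain ⟨σ, h⟩ := τ.ext
  exact h.D_add hx hy

theorem dTau_eq (τ : QuasiTrace R) (a : R) : dTau τ a = D τ.toFun a := rfl

/-! ### Ultrafilter limits -/

theorem PreQT.lim {φ : ℕ → R → ℝ≥0∞} (h : ∀ n, PreQT (φ n)) (U : Ultrafilter ℕ)
    {ψ : R → ℝ≥0∞} (hψ : ∀ a, Tendsto (fun n => φ n a) U (𝓝 (ψ a))) : PreQT ψ where
  zero := tendsto_nhds_unique (hψ 0) (by simp [(h _).zero])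
  smul r a hr ha := by
    refine tendsto_nhds_unique (hψ _) ?_
    simp only [fun n => (h n).smul r a hr ha]
    exact ENNReal.Tendsto.const_mul (hψ a) (Or.inr ENNReal.ofReal_ne_top)
  add a b ha hb hab := by
    refine tendsto_nhds_unique (hψ _) ?_
    simp only [fun n => (h n).add a b ha hb hab]
    exact (hψ a).add (hψ b)
  tr x := by
    refine tendsto_nhds_unique (hψ _) ?_
    simp only [fun n => (h n).tr x]
    exact hψ _

theorem exists_lim {X : Type*} (φ : ℕ → X → ℝ≥0∞) (U : Ultrafilter ℕ) :
    ∃ ψ : X → ℝ≥0∞, ∀ a, Tendsto (fun n => φ n a) U (𝓝 (ψ a)) := by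
  have : ∀ a, ∃ l, Tendsto (fun n => φ n a) U (𝓝 l) := by
    intro a
    obtain ⟨l, _, hl⟩ := isCompact_univ.ultrafilter_le_nhds (U.map fun n => φ n a) (by simp)
    exact ⟨l, hl⟩
  choose ψ hψ using this
  exact ⟨ψ, hψ⟩

theorem Ext.lim {φ : ℕ → R → ℝ≥0∞} {σ : ℕ → M2 R → ℝ≥0∞} (h : ∀ n, Ext (φ n) (σ n))
    (U : Ultrafilter ℕ) {ψ : R → ℝ≥0∞} (hψ : ∀ a, Tendsto (fun n => φ n a) U (𝓝 (ψ a))) :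
    ∃ ρ, Ext ψ ρ := by
  obtain ⟨ρ, hρ⟩ := exists_lim σ U
  refine ⟨ρ, PreQT.lim (fun n => (h n).pre) U hψ, PreQT.lim (fun n => (h n).pre2) U hρ, ?_⟩
  intro a
  refine tendsto_nhds_unique (hρ _) ?_
  simp only [fun n => (h n).compat a]
  exact hψ a

/-! ### The Pedersen ideal -/

theorem ped_of_mul {p₁ p : R} (h : p₁ * p = p) : p ∈ pedersen R := by
  refine Set.mem_iInter₂.2 fun I hI => ?_
  obtain ⟨⟨-, -, hadd, -, hmul⟩, hd⟩ := hI
  obtain ⟨x, hxI, hx⟩ := Metric.mem_closure_iff.1 (hd (Set.mem_univ p₁)) 1 one_pos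
  rw [dist_eq_norm] at hx
  have hd1 : ‖((p₁ - x : R) : Unitization ℂ R)‖ < 1 := by rwa [Unitization.norm_inr]
  obtain ⟨u, hu⟩ := isUnit_one_sub_of_norm_lt_one hd1
  have hy : x * p ∈ I := (hmul x hxI p (Set.mem_univ _)).1
  have h1 : (u : Unitization ℂ R) * (p : Unitization ℂ R) = ((x * p : R) : Unitization ℂ R) := by
    rw [hu, sub_mul, one_mul, ← Unitization.inr_mul, sub_mul, h, ← Unitization.inr_sub,
      sub_sub_cancel]
  have h2 : (p : Unitization ℂ R) =
      ((u⁻¹ : (Unitization ℂ R)ˣ) : Unitization ℂ R) * ((x * p : R) : Unitization ℂ R) := by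
    rw [← h1, ← mul_assoc, Units.inv_mul, one_mul]
  set w := ((u⁻¹ : (Unitization ℂ R)ˣ) : Unitization ℂ R) with hw
  have h3 : w.fst = 1 := by
    have h4 : w * (u : Unitization ℂ R) = 1 := Units.inv_mul u
    have := congrArg (fun z : Unitization ℂ R => z.fst) h4
    simp only [Unitization.fst_mul, hu] at this
    have h6 : (1 - ((p₁ - x : R) : Unitization ℂ R)).fst = 1 := sub_zero (1 : ℂ)
    rw [h6, mul_one] at this
    exact this
  have h5 := congrArg (fun z : Unitization ℂ R => z.snd) h2
  simp only [Unitization.snd_mul] at h5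
  simp only [h3, Unitization.snd_inr, Unitization.fst_inr, one_smul, zero_smul, add_zero] at h5
  rw [h5]
  exact hadd _ hy _ ((hmul _ hy _ (Set.mem_univ _)).2)

/-- algebraic ideal generated by `F` -/
def idl (F : R) : AddSubmonoid R := AddSubmonoid.closure {x : R | ∃ y z : R, x = y * F * z}

theorem idl_smul {F x : R} (c : ℂ) (hx : x ∈ idl F) : c • x ∈ idl F := by
  induction hx using AddSubmonoid.closure_induction with
  | mem x h =>
    obtain ⟨y, z, rfl⟩ := h
    exact AddSubmonoid.subset_closure ⟨c • y, z, by rw [smul_mul_assoc, smul_mul_assoc]⟩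
  | zero => rw [smul_zero]; exact zero_mem _
  | add x y _ _ hx hy => rw [smul_add]; exact add_mem hx hy

theorem idl_mul {F x : R} (b : R) (hx : x ∈ idl F) : x * b ∈ idl F ∧ b * x ∈ idl F := by
  induction hx using AddSubmonoid.closure_induction with
  | mem x h =>
    obtain ⟨y, z, rfl⟩ := h
    exact ⟨AddSubmonoid.subset_closure ⟨y, z * b, by simp only [mul_assoc]⟩,
      AddSubmonoid.subset_closure ⟨b * y, z, by simp only [mul_assoc]⟩⟩
  | zero => rw [mul_zero, zero_mul]; exact ⟨zero_mem _, zero_mem _⟩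
  | add x y _ _ hx hy =>
    rw [mul_add, add_mul]; exact ⟨add_mem hx.1 hy.1, add_mem hx.2 hy.2⟩

theorem idl_neg {F x : R} (hx : x ∈ idl F) : -x ∈ idl F := by
  have := idl_smul (-1) hx; rwa [neg_one_smul] at this

theorem idl_ideal (F : R) : IsIdealIn R Set.univ (idl F : Set R) :=
  ⟨Set.subset_univ _, zero_mem _, fun _ hx _ hy => add_mem hx hy, fun _ hx => idl_neg hx,
    fun _ hx b _ => idl_mul b hx⟩

/-- as a submodule -/
def idlS (F : R) : Submodule ℂ R := { idl F with smul_mem' := fun c _ hx => idl_smul c hx }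

theorem idl_dense (hs : IsSimpleCStar R) {f : R} (hf : star f = f) (hf0 : f ≠ 0) :
    closure (idl f : Set R) = Set.univ := by
  have hadd : ∀ {x y}, x ∈ (idlS f).topologicalClosure → y ∈ (idlS f).topologicalClosure →
    x + y ∈ (idlS f).topologicalClosure := fun hx hy => add_mem hx hy
  let I : TwoSidedIdeal R := TwoSidedIdeal.mk' (closure (idl f : Set R))
    ((idlS f).topologicalClosure.zero_mem) hadd
    (fun {x} hx => (idlS f).topologicalClosure.neg_mem hx)
    (fun {x y} hy => map_mem_closure (f := fun t => x * t) (by fun_prop) hy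
      fun t ht => (idl_mul x ht).2)
    (fun {x y} hx => map_mem_closure (f := fun t => t * y) (by fun_prop) hx
      fun t ht => (idl_mul y ht).1)
  have hI : (I : Set R) = closure (idl f : Set R) := by
    ext x
    exact TwoSidedIdeal.mem_mk' _ _ _ _ _ _ _
  rcases hs.2 I (by rw [hI]; exact isClosed_closure) with h | h
  · exfalso
    rw [hI] at h
    have h1 : f * f * f ∈ closure (idl f : Set R) :=
      subset_closure (AddSubmonoid.subset_closure ⟨f, f, rfl⟩)
    rw [h, Set.mem_singleton_iff] at h1
    apply hf0
    have h2 : star (f * f) * (f * f) = 0 := by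
      rw [star_mul, hf, ← mul_assoc, h1, zero_mul]
    have h3 := CStarRing.star_mul_self_eq_zero_iff _ |>.1 h2
    have h4 : star f * f = 0 := by rwa [hf]
    exact CStarRing.star_mul_self_eq_zero_iff _ |>.1 h4
  · rwa [hI] at h


theorem emb_idl (SB : Stabilization A W) {f x : A} (hx : x ∈ idl f) (i j : ℕ) :
    SB.emb i j x ∈ idl (SB.emb 0 0 f) := by
  induction hx using AddSubmonoid.closure_induction with
  | mem x h =>
    obtain ⟨y, z, rfl⟩ := h
    refine AddSubmonoid.subset_closure ⟨SB.emb i 0 y, SB.emb 0 j z, ?_⟩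
    rw [SB.emb_mul, if_pos rfl, SB.emb_mul, if_pos rfl]
  | zero => rw [map_zero]; exact zero_mem _
  | add x y _ _ hx hy => rw [map_add]; exact add_mem hx hy

theorem emb_continuous (SB : Stabilization A W) (i j : ℕ) : Continuous (SB.emb i j) :=
  AddMonoidHomClass.continuous_of_bound (SB.emb i j) 1 fun x => by
    rw [one_mul, SB.norm_emb]

theorem idl_dense_W (SB : Stabilization A W) (hs : IsSimpleCStar A) {f : A} (hf : star f = f)
    (hf0 : f ≠ 0) : closure (idl (SB.emb 0 0 f) : Set W) = Set.univ := by
  have h1 : Submodule.span ℂ {w : W | ∃ (i j : ℕ) (a : A), w = SB.emb i j a} ≤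
      (idlS (SB.emb 0 0 f)).topologicalClosure := by
    rw [Submodule.span_le]
    rintro w ⟨i, j, a, rfl⟩
    refine map_mem_closure (emb_continuous SB i j) (s := (idl f : Set A)) ?_
      fun x hx => emb_idl SB hx i j
    rw [idl_dense hs hf hf0]; trivial
  have h2 : Dense ((idlS (SB.emb 0 0 f)).topologicalClosure : Set W) := SB.dense_span.mono h1
  have h3 := h2.closure_eq
  rwa [(idlS (SB.emb 0 0 f)).isClosed_topologicalClosure.closure_eq] at h3

theorem idl_bound {F x : R} (hF : 0 ≤ F) (hx : x ∈ idl F) : ∃ w : R, 0 ≤ w ∧ x + star x ≤ w ∧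
    ∃ C : ℝ≥0∞, C ≠ ∞ ∧ ∀ τ : QuasiTrace R, τ.toFun w ≤ C * τ.toFun F := by
  obtain ⟨k, hk, hkk⟩ := sqrt_data hF
  have aux : ∀ y : R, 0 ≤ star y * F * y ∧ ∃ C : ℝ≥0∞, C ≠ ∞ ∧
      ∀ τ : QuasiTrace R, τ.toFun (star y * F * y) ≤ C * τ.toFun F := by
    intro y
    refine ⟨star_left_conjugate_nonneg hF y, ENNReal.ofReal (‖y * star y‖ + 1),
      ENNReal.ofReal_ne_top, fun τ => ?_⟩
    have h1 : τ.toFun (star y * F * y) = τ.toFun (k * (y * star y) * k) := by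
      have := τ.map_star_mul_self (k * y)
      rw [star_mul, hk] at this
      rw [← hkk]
      simpa only [mul_assoc] using this
    have hpos : 0 ≤ k * (y * star y) * k := by
      have := star_left_conjugate_nonneg (mul_star_self_nonneg y) k
      rwa [hk] at this
    rw [h1, ← τ.map_smul _ _ (by positivity) hF]
    refine τ.mono hpos ((conj_le_norm hk (sa_of_nonneg (mul_star_self_nonneg y))).trans ?_)
    rw [hkk]
    exact smul_mono (by linarith) hF
  have plus : ∀ u v : R, 0 ≤ u → 0 ≤ v →
      (∃ C : ℝ≥0∞, C ≠ ∞ ∧ ∀ τ : QuasiTrace R, τ.toFun u ≤ C * τ.toFun F) →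
      (∃ C : ℝ≥0∞, C ≠ ∞ ∧ ∀ τ : QuasiTrace R, τ.toFun v ≤ C * τ.toFun F) →
      ∃ C : ℝ≥0∞, C ≠ ∞ ∧ ∀ τ : QuasiTrace R, τ.toFun (u + v) ≤ C * τ.toFun F := by
    rintro u v hu hv ⟨C, hC, h1⟩ ⟨C', hC', h2⟩
    refine ⟨2 * (C + C'), ENNReal.mul_ne_top (by simp) (by simp [hC, hC']), fun τ => ?_⟩
    refine (τ.add_le hu hv).trans ?_
    rw [mul_assoc, add_mul]
    gcongr
    · exact h1 τ
    · exact h2 τ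
  induction hx using AddSubmonoid.closure_induction with
  | mem x h =>
    obtain ⟨y, z, rfl⟩ := h
    obtain ⟨h1, h2⟩ := aux (star y)
    obtain ⟨h3, h4⟩ := aux z
    refine ⟨_, add_nonneg h1 h3, ?_, plus _ _ h1 h3 h2 h4⟩
    rw [← sub_nonneg]
    have := star_left_conjugate_nonneg hF (star y - z)
    convert this using 1
    simp only [star_mul, star_sub, star_star, sa_of_nonneg hF]
    noncomm_ring
  | zero => exact ⟨0, le_rfl, by simp, 0, by simp, fun τ => by simp [τ.map_zero]⟩
  | add x y _ _ hx hy =>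
    obtain ⟨w, hw, hxw, h1⟩ := hx
    obtain ⟨v, hv, hyv, h2⟩ := hy
    refine ⟨w + v, add_nonneg hw hv, ?_, plus _ _ hw hv h1 h2⟩
    rw [star_add, add_add_add_comm]
    exact add_le_add hxw hyv

theorem idl_bound' {F x : R} (hF : 0 ≤ F) (hx : x ∈ idl F) (hx0 : 0 ≤ x) :
    ∃ C : ℝ≥0∞, C ≠ ∞ ∧ ∀ τ : QuasiTrace R, τ.toFun x ≤ C * τ.toFun F := by
  obtain ⟨w, hw, hxw, C, hC, h⟩ := idl_bound hF hx
  refine ⟨C, hC, fun τ => (τ.mono hx0 ?_).trans (h τ)⟩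
  refine le_trans ?_ hxw
  rw [sa_of_nonneg hx0]
  exact le_add_of_nonneg_left hx0

theorem ped_bound {F x : R} (hF : 0 ≤ F) (hd : closure (idl F : Set R) = Set.univ)
    (hx : x ∈ pedersen R) (hx0 : 0 ≤ x) :
    ∃ C : ℝ≥0∞, C ≠ ∞ ∧ ∀ τ : QuasiTrace R, τ.toFun x ≤ C * τ.toFun F :=
  idl_bound' hF (Set.mem_iInter₂.1 hx _ ⟨idl_ideal F, hd.ge⟩) hx0

theorem zero_of_F {F : R} (hF : 0 ≤ F) (hd : closure (idl F : Set R) = Set.univ)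
    (τ : QuasiTrace R) (h : τ.toFun F = 0) : τ.IsZero := by
  intro s
  by_cases hs : 0 ≤ s
  swap
  · exact τ.zero_of_not_nonneg s hs
  obtain ⟨k, hk, hkk⟩ := sqrt_data hs
  by_contra hne
  have h1 := τ.lowerSemicontinuousOn s hs 0 (pos_iff_ne_zero.2 hne)
  rw [eventually_nhdsWithin_iff] at h1
  have hcont : Tendsto (fun x : R => star x * x) (𝓝 k) (𝓝 s) := by
    have : Continuous (fun x : R => star x * x) := by fun_prop
    have := this.tendsto k
    rwa [hk, hkk] at this
  have h2 := hcont.eventually h1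
  have hkc : k ∈ closure (idl F : Set R) := by rw [hd]; trivial
  obtain ⟨x, hx1, hx2⟩ := (mem_closure_iff_frequently.1 hkc).and_eventually h2 |>.exists
  have h3 := hx2 (star_mul_self_nonneg x)
  obtain ⟨C, hC, h4⟩ := idl_bound' hF (idl_mul (star x) hx1).2 (star_mul_self_nonneg x)
  have := h4 τ
  rw [h, mul_zero] at this
  exact absurd h3 (not_lt.2 this)

/-- corner embedding as a star homomorphism -/
def emb00 (SB : Stabilization A W) : A →⋆ₙₐ[ℂ] W where
  toFun := SB.emb 0 0
  map_smul' r a := by simp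
  map_zero' := map_zero _
  map_add' a b := map_add _ a b
  map_mul' a b := by rw [SB.emb_mul, if_pos rfl]
  map_star' a := (SB.emb_star 0 0 a).symm

theorem hom_fEps {S : Type*} [NonUnitalCStarAlgebra S] [PartialOrder S] [StarOrderedRing S]
    (f : R →⋆ₙₐ[ℂ] S) {a : R} (ha : 0 ≤ a) (ε : ℝ) : f (fEps ε a) = fEps ε (f a) := by
  have := (IsSelfAdjoint.of_nonneg ha)
  exact NonUnitalStarAlgHom.map_cfcₙ (S := ℂ) f (cutoff ε) a
    (cutoff_cont ε).continuousOn (cutoff_zero ε) (continuous_hom _) this (this.map f)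

theorem hom_nonneg {S : Type*} [NonUnitalCStarAlgebra S] [PartialOrder S] [StarOrderedRing S]
    (f : R →⋆ₙₐ[ℂ] S) {a : R} (ha : 0 ≤ a) : 0 ≤ f a := by
  obtain ⟨k, hk, rfl⟩ := sqrt_data ha
  rw [map_mul]
  exact hsq_nonneg (by rw [← map_star, hk])

theorem setup (SB : Stabilization A W) (hs : IsSimpleCStar A) : ∃ e : A, 0 ≤ e ∧ e ≠ 0 ∧
    e ∈ pedersen A ∧
    (∀ τ : QuasiTrace W, ¬ τ.IsZero → ∃ c : ℝ≥0∞, c ≠ 0 ∧ c ≠ ∞ ∧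
      ∃ τ' ∈ QTSetHer (SB.emb 0 0 e), ∀ x, τ'.toFun x = c * τ.toFun x) ∧
    (∀ x ∈ pedersen W, 0 ≤ x → ∃ C : ℝ≥0∞, C ≠ ∞ ∧ ∀ τ ∈ QTSetHer (SB.emb 0 0 e),
      τ.toFun x ≤ C) ∧
    (∃ a₁ : W, 0 ≤ a₁ ∧ ∃ δ : ℝ, 0 < δ ∧ ∀ τ ∈ QTSetHer (SB.emb 0 0 e),
      1 ≤ τ.toFun (fEps δ a₁)) ∧
    (∀ τ ∈ QTSetHer (SB.emb 0 0 e), ¬ τ.IsZero) := by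
  obtain ⟨x, hx⟩ := hs.1
  set a₀ := star x * x with ha₀
  have ha : 0 ≤ a₀ := star_mul_self_nonneg x
  have hne : a₀ ≠ 0 := fun h => hx (CStarRing.star_mul_self_eq_zero_iff _ |>.1 h)
  have hn : 0 < ‖a₀‖ := norm_pos_iff.2 hne
  set δ := ‖a₀‖ / 2 with hδd
  have hδ : 0 < δ := by positivity
  set e := fEps δ a₀ with he
  have he0 : 0 ≤ e := fEps_nonneg ha _
  have hene : e ≠ 0 := by
    intro h
    have := norm_sub_conj_fEps ha hδ
    rw [← he, h, mul_zero, sub_zero] at this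
    linarith
  set a₁ := emb00 SB a₀ with ha₁
  have ha1 : 0 ≤ a₁ := hom_nonneg _ ha
  have hE : SB.emb 0 0 e = fEps δ a₁ := hom_fEps (emb00 SB) ha δ
  set E := fEps δ a₁ with hEd
  have hE0 : 0 ≤ E := fEps_nonneg ha1 _
  have hEs : star E = E := fEps_star _ _
  set F := E * E * E with hF
  have hF0 : 0 ≤ F := by
    have := star_left_conjugate_nonneg hE0 E
    rwa [hEs] at this
  have hEn : ‖E‖ ≤ 1 := fEps_norm ha1 _
  have hFn : ‖F‖ ≤ 1 := by
    calc ‖F‖ ≤ ‖E‖ * ‖E‖ * ‖E‖ := (norm_mul_le _ _).trans (by gcongr; exact norm_mul_le _ _)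
      _ ≤ 1 * 1 * 1 := by gcongr
      _ = 1 := by norm_num
  have hes : star e = e := sa_of_nonneg he0
  have hFd : closure (idl F : Set W) = Set.univ := by
    have h1 : star (e * e * e) = e * e * e := by simp only [star_mul, hes, mul_assoc]
    have h2 : SB.emb 0 0 (e * e * e) = F := by
      have : emb00 SB (e * e * e) = F := by
        rw [map_mul, map_mul]
        change SB.emb 0 0 e * SB.emb 0 0 e * SB.emb 0 0 e = F
        rw [hE]
      exact this
    rw [← h2]
    refine idl_dense_W SB hs h1 ?_
    intro h3
    apply hene
    have h2 : star (e * e) * (e * e) = 0 := by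
      rw [star_mul, hes, ← mul_assoc, h3, zero_mul]
    have h3 := CStarRing.star_mul_self_eq_zero_iff _ |>.1 h2
    have h4 : star e * e = 0 := by rwa [hes]
    exact CStarRing.star_mul_self_eq_zero_iff _ |>.1 h4
  set P := fEps (δ / 2) a₁ with hP
  have hPs : star P = P := fEps_star _ _
  have hPE : P * E = E := fEps_mul (by positivity) le_rfl
  have hPP : fEps (δ / 4) a₁ * P = P := fEps_mul (by positivity) (by linarith)
  have hPped : P * P ∈ pedersen W := ped_of_mul (p₁ := fEps (δ / 4) a₁) (by rw [← mul_assoc, hPP])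
  have hPw : ∀ w ∈ her E, P * w = w := by
    intro w hw
    have hcl : IsClosed {w : W | P * w = w} := isClosed_eq (by fun_prop) (by fun_prop)
    refine closure_minimal ?_ hcl hw
    rintro _ ⟨y, rfl⟩
    change P * (E * y * E) = E * y * E
    rw [← mul_assoc, ← mul_assoc, hPE]
  have hFher : F ∈ her E := subset_closure ⟨E, rfl⟩
  have low : ∀ τ : QuasiTrace W, τ.toFun F ≤
      ⨆ a : {a : W // a ∈ her E ∧ 0 ≤ a ∧ ‖a‖ ≤ 1}, τ.toFun a := fun τ =>
    le_iSup (fun a : {a : W // a ∈ her E ∧ 0 ≤ a ∧ ‖a‖ ≤ 1} => τ.toFun a) ⟨F, hFher, hF0, hFn⟩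
  have up : ∀ τ : QuasiTrace W,
      (⨆ a : {a : W // a ∈ her E ∧ 0 ≤ a ∧ ‖a‖ ≤ 1}, τ.toFun a) ≤ τ.toFun (P * P) := fun τ =>
    iSup_le fun w => τ.pre.mono_mul w.2.2.1 w.2.2.2 hPs (hPw _ w.2.1)
  refine ⟨e, he0, hene, ped_of_mul (p₁ := fEps (δ / 2) a₀) (fEps_mul (by positivity) le_rfl),
    ?_, ?_, ?_, ?_⟩
  · intro τ hτ
    set N := ⨆ a : {a : W // a ∈ her E ∧ 0 ≤ a ∧ ‖a‖ ≤ 1}, τ.toFun a with hN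
    have hN0 : N ≠ 0 := fun h => hτ (zero_of_F hF0 hFd τ (le_antisymm ((low τ).trans h.le) bot_le))
    have hN1 : N ≠ ∞ := ((up τ).trans_lt (τ.finite_on_pedersen _ hPped (hsq_nonneg hPs))).ne
    obtain ⟨τ', h'⟩ := τ.exists_scale (ENNReal.inv_ne_top.2 hN0)
    refine ⟨N⁻¹, ENNReal.inv_ne_zero.2 hN1, ENNReal.inv_ne_top.2 hN0, τ', ?_, h'⟩
    rw [hE]
    change (⨆ a : {a : W // a ∈ her E ∧ 0 ≤ a ∧ ‖a‖ ≤ 1}, τ'.toFun a) = 1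
    simp only [h']
    rw [← ENNReal.mul_iSup, ← hN, ENNReal.inv_mul_cancel hN0 hN1]
  · intro y hy hy0
    obtain ⟨C, hC, h⟩ := ped_bound hF0 hFd hy hy0
    refine ⟨C, hC, fun τ hτ => (h τ).trans ?_⟩
    rw [hE] at hτ
    have h1 : (⨆ a : {a : W // a ∈ her E ∧ 0 ≤ a ∧ ‖a‖ ≤ 1}, τ.toFun a) = 1 := hτ
    calc C * τ.toFun F ≤ C * 1 := by gcongr; exact h1 ▸ low τ
      _ = C := mul_one _
  · refine ⟨a₁, ha1, δ / 2, by positivity, fun τ hτ => ?_⟩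
    rw [hE] at hτ
    have h1 : (⨆ a : {a : W // a ∈ her E ∧ 0 ≤ a ∧ ‖a‖ ≤ 1}, τ.toFun a) = 1 := hτ
    rw [← h1]
    refine (up τ).trans ?_
    rw [hP, fEps, c_mul (cutoff_cont _) (cutoff_zero _) (cutoff_cont _) (cutoff_zero _)]
    refine τ.pre.mono_fun ha1 ((cutoff_cont _).mul (cutoff_cont _)) (by simp [cutoff_zero])
      (cutoff_cont _) (cutoff_zero _)
      (fun t _ => mul_nonneg (cutoff_nonneg _ _) (cutoff_nonneg _ _)) fun t ht => ?_
    nlinarith [cutoff_nonneg (δ / 2) t, cutoff_le_one (δ / 2) t]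
  · intro τ hτ h0
    have h1 : (⨆ a : {a : W // a ∈ her (SB.emb 0 0 e) ∧ 0 ≤ a ∧ ‖a‖ ≤ 1}, τ.toFun a) = 1 := hτ
    have h2 : ∀ x, τ.toFun x = 0 := h0
    simp [h2] at h1

/-! ### The uniform gap -/

theorem omegaOn_mono {S T : Set (QuasiTrace R)} (h : S ⊆ T) {a : R} (h0 : omegaOn T a = 0) :
    omegaOn S a = 0 := by
  refine le_antisymm (le_trans ?_ h0.le) bot_le
  exact iInf_mono fun n => biSup_mono fun τ hτ => h hτ

theorem omega_small {S : Set (QuasiTrace R)} {a : R} (h0 : omegaOn S a = 0) {ε : ℝ≥0∞}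
    (hε : ε ≠ 0) : ∃ k : ℕ, ∀ τ ∈ S, D τ.toFun a ≤ τ.toFun (fEps (1 / ((k : ℝ) + 1)) a) + ε := by
  have h1 : omegaOn S a < ε := by rw [h0]; exact pos_iff_ne_zero.2 hε
  obtain ⟨k, hk⟩ := iInf_lt_iff.1 h1
  refine ⟨k, fun τ hτ => ?_⟩
  have h2 := (le_iSup₂ (f := fun (τ : QuasiTrace R) (_ : τ ∈ S) =>
    dTau τ a - τ.toFun (fEps (1 / ((k : ℝ) + 1)) a)) τ hτ).trans hk.le
  rw [tsub_le_iff_left] at h2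
  exact h2

theorem uniform_gap {S : Set (QuasiTrace R)}
    (hfin : ∀ x ∈ pedersen R, 0 ≤ x → ∃ C : ℝ≥0∞, C ≠ ∞ ∧ ∀ τ ∈ S, τ.toFun x ≤ C)
    {a₁ : R} (ha₁ : 0 ≤ a₁) {δ : ℝ} (hδ : 0 < δ) (hone : ∀ τ ∈ S, 1 ≤ τ.toFun (fEps δ a₁))
    {a b : R} (ha : 0 ≤ a) (hb : 0 ≤ b)
    (hlt : ∀ τ : QuasiTrace R, ¬ τ.IsZero → D τ.toFun a < D τ.toFun b)
    (hω : omegaOn S a = 0) :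
    ∃ η : ℝ≥0∞, η ≠ 0 ∧ ∀ τ ∈ S, D τ.toFun a + η ≤ D τ.toFun b := by
  by_contra hcon
  push Not at hcon
  have hch : ∀ n : ℕ, ∃ τ ∈ S, D τ.toFun b < D τ.toFun a + ((n : ℝ≥0∞))⁻¹ := by
    intro n
    exact hcon _ (ENNReal.inv_ne_zero.2 (ENNReal.natCast_ne_top n))
  choose t htS htlt using hch
  choose σ hσ using fun n => (t n).ext
  set U : Ultrafilter ℕ := hyperfilter ℕ
  obtain ⟨φ, hφ⟩ := exists_lim (fun n => (t n).toFun) U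
  obtain ⟨ρ, hρ⟩ := Ext.lim hσ U hφ
  have hU : (U : Filter ℕ) ≤ atTop := by
    rw [← Nat.cofinite_eq_atTop]; exact hyperfilter_le_cofinite
  let T : QuasiTrace R := hρ.reg.toQT hρ.pre.reg_lsc (fun x hx => by rw [reg, if_neg hx]) (by
    intro x hx hx0
    obtain ⟨C, hC, h⟩ := hfin x hx hx0
    refine (hρ.pre.reg_le hx0).trans_lt (lt_of_le_of_lt ?_ hC.lt_top)
    exact le_of_tendsto (hφ x) (Eventually.of_forall fun n => h _ (htS n)))
  have hT : T.toFun = reg φ := rfl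
  have hTnz : ¬ T.IsZero := by
    intro h
    have h1 : (1 : ℝ≥0∞) ≤ φ (fEps δ a₁) :=
      ge_of_tendsto (hφ _) (Eventually.of_forall fun n => hone _ (htS n))
    have h2 := hρ.pre.reg_fEps ha₁ hδ
    have h3 : reg φ (fEps (δ / 2) a₁) = 0 := h _
    rw [h3] at h2
    exact absurd (h1.trans h2) (by simp)
  refine absurd (hlt T hTnz) (not_lt.2 ?_)
  refine ENNReal.le_of_forall_pos_le_add fun ε hε _ => ?_
  have hε' : (ε : ℝ≥0∞) ≠ 0 := by exact_mod_cast hε.ne'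
  obtain ⟨k, hk⟩ := omega_small hω hε'
  have h1 : φ (fEps (1 / ((k : ℝ) + 1)) a) ≤ D T.toFun a := by
    refine (hρ.pre.reg_fEps ha (by positivity)).trans ?_
    exact T.pre.le_D ha (by positivity)
  refine le_trans (iSup_le fun m => ?_) (add_le_add_left h1 _)
  refine (hρ.pre.reg_le (fEps_nonneg hb _)).trans ?_
  have hlim : Tendsto (fun n : ℕ => ((t n).toFun (fEps (1 / ((k : ℝ) + 1)) a) + ε) +
      ((n : ℝ≥0∞))⁻¹) U (𝓝 ((φ (fEps (1 / ((k : ℝ) + 1)) a) + ε) + 0)) :=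
    ((hφ _).add tendsto_const_nhds).add (ENNReal.tendsto_inv_nat_nhds_zero.mono_left hU)
  rw [add_zero] at hlim
  refine le_of_tendsto_of_tendsto' (hφ _) hlim fun n => ?_
  refine ((t n).pre.le_D hb (by positivity)).trans ((htlt n).le.trans ?_)
  exact add_le_add_left (hk _ (htS n)) _

/-! ### One step of the construction -/

/-- closed right ideal generated by `β` -/
def clR (β : R) : Submodule ℂ R := (LinearMap.range (LinearMap.mulLeft ℂ β)).topologicalClosure

theorem mem_clR_mul (β r : R) : β * r ∈ clR β :=
  Submodule.le_topologicalClosure _ ⟨r, rfl⟩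

theorem clR_closed (β : R) : IsClosed (clR β : Set R) := Submodule.isClosed_topologicalClosure _

theorem clR_mul {β x : R} (hx : x ∈ clR β) (r : R) : x * r ∈ clR β := by
  refine map_mem_closure (f := fun t => t * r) (by fun_prop) hx ?_
  rintro _ ⟨y, rfl⟩
  exact ⟨y * r, by simp [mul_assoc]⟩

theorem clR_le {β m : R} (h : m ∈ clR β) : clR m ≤ clR β := by
  refine Submodule.topologicalClosure_minimal _ ?_ (clR_closed β)
  rintro _ ⟨y, rfl⟩
  exact clR_mul h y

theorem closure_sub_clR {z β : R} (hz : z ∈ clR β) {Y : R}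
    (hY : Y ∈ closure {y : R | ∃ r, y = z * r}) : Y ∈ clR β := by
  refine closure_minimal ?_ (clR_closed β) hY
  rintro _ ⟨r, rfl⟩
  exact clR_mul hz r

theorem her_of_clR {b X : R} (hb : star b = b) (hX : X ∈ clR b) : X * star X ∈ her b := by
  refine map_mem_closure (f := fun t => t * star t) (by fun_prop) hX ?_
  rintro _ ⟨y, rfl⟩
  exact ⟨y * star y, by simp [mul_assoc, hb]⟩

theorem sqrt_clR {β : R} (hβ : 0 ≤ β) : ∃ m : R, star m = m ∧ m * m = β ∧ m ∈ clR β := by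
  have hc : Continuous (fun t : ℝ => √t) := by fun_prop
  refine ⟨cfcₙ (fun t : ℝ => √t) β, c_star _ _, ?_, ?_⟩
  · rw [c_mul hc Real.sqrt_zero hc Real.sqrt_zero]
    conv_rhs => rw [← c_id hβ]
    exact c_congr hβ fun t ht => Real.mul_self_sqrt ht
  · refine Metric.mem_closure_iff.2 fun ε hε => ?_
    set g : ℝ → ℝ := fun t => √t / (max t 0 + ε ^ 2) with hg
    have hgc : Continuous g := by
      refine Continuous.div (by fun_prop) (by fun_prop) fun t => ?_
      have : 0 ≤ max t 0 := le_max_right _ _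
      positivity
    have hg0 : g 0 = 0 := by simp [hg]
    refine ⟨β * cfcₙ g β, ⟨_, rfl⟩, ?_⟩
    have h1 : β * cfcₙ g β = cfcₙ (fun t => g t * t) β := by
      rw [← c_mul_id hgc hg0 hβ, c_commute rfl]
    rw [dist_eq_norm, h1, c_sub hc Real.sqrt_zero (g := fun t => g t * t) (by fun_prop)
      (by simp)]
    refine lt_of_le_of_lt (c_norm_le hβ (c := ε / 2) fun t ht => ?_) (by linarith)
    have hpos : 0 < t + ε ^ 2 := by positivity
    have h2 : √t - g t * t = √t * ε ^ 2 / (t + ε ^ 2) := by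
      simp only [hg, max_eq_left ht]
      field_simp
      ring
    rw [h2, abs_of_nonneg (by positivity), div_le_iff₀ hpos]
    have h3 := Real.sq_sqrt ht
    nlinarith [sq_nonneg (√t - ε), mul_nonneg hε.le (sq_nonneg (√t - ε))]

theorem sq_le_norm_smul {q : R} (hq : 0 ≤ q) : q * q ≤ ‖q‖ • q := by
  obtain ⟨l, hl, hll⟩ := sqrt_data hq
  have := conj_le_norm hl (sa_of_nonneg hq)
  rw [hll] at this
  convert this using 1
  rw [← hll]; simp only [mul_assoc]

theorem step_lemma {k h γ β : R} (hβ : 0 ≤ β) (hk : 0 ≤ k) (hh : star h = h) (hkh : k * h = h)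
    (hγ : star γ = γ) (hhγ : h * h * γ = γ) (hC : CuntzLE k β) :
    ∃ x β' : R, 0 ≤ β' ∧ star x * x = γ * γ ∧ β' * x = 0 ∧ x ∈ clR β ∧ β' ∈ clR β ∧
      ∀ τ : QuasiTrace R, D τ.toFun β ≤ D τ.toFun β' + D τ.toFun k := by
  obtain ⟨r, hr⟩ := hC.norm (κ := 1 / 4) (by norm_num)
  obtain ⟨m, hm, hmm, hmcl⟩ := sqrt_clR hβ
  have hks := sa_of_nonneg hk
  have hhk : h * k = h := by
    have := congrArg star hkh
    rwa [star_mul, hh, hks] at this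
  have hβ2 : 0 ≤ star r * β * r := star_left_conjugate_nonneg hβ r
  have h1 := H_of_norm hk hβ2 hr h hh
  rw [hhk] at h1
  have h2 : h * h ≤ (4 / 3 : ℝ) • (h * (star r * β * r) * h) := by
    have e1 : h * h = (3 / 4 : ℝ) • (h * h) + (1 / 4 : ℝ) • (h * h) := by
      rw [← add_smul]; norm_num
    have h3 : (3 / 4 : ℝ) • (h * h) ≤ h * (star r * β * r) * h := by
      refine le_of_add_le_add_right (a := (1 / 4 : ℝ) • (h * h)) ?_
      rw [← e1]; exact h1
    have h4 := smul_le_smul_of_nonneg_left h3 (show (0 : ℝ) ≤ 4 / 3 by norm_num)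
    rw [smul_smul] at h4
    norm_num at h4
    simpa using h4
  set z := √(4 / 3 : ℝ) • (m * r * h) with hz
  have hzz : star z * z = (4 / 3 : ℝ) • (h * (star r * β * r) * h) := by
    rw [hz, star_smul, smul_mul_smul_comm, star_trivial, Real.mul_self_sqrt (by norm_num),
      star_mul, star_mul, hh, hm, ← hmm]
    simp only [mul_assoc]
  have hzcl : z ∈ clR β := by
    have : m * r * h ∈ clR β := clR_mul (clR_mul hmcl r) h
    exact (clR β).smul_mem ((√(4 / 3 : ℝ) : ℝ) : ℂ) this
  obtain ⟨s, hs, hss⟩ := exists_factor hh (h2.trans hzz.ge)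
  have hscl : s ∈ clR β := closure_sub_clR hzcl hs
  set q := s * star s with hq
  have hq0 : 0 ≤ q := mul_star_self_nonneg s
  have hqs : star q = q := sa_of_nonneg hq0
  have hβ' := conj_one_sub hβ hqs
  have hβcl : β ∈ clR β := by have := clR_mul hmcl m; rwa [hmm] at this
  have hqcl : ∀ y, q * y ∈ clR β := fun y => by
    rw [hq, mul_assoc]; exact clR_mul hscl _
  have hqx : q * (s * γ) = s * γ := by
    rw [hq]
    calc s * star s * (s * γ) = s * ((star s * s) * γ) := by simp only [mul_assoc]
      _ = s * γ := by rw [hss, hhγ]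
  refine ⟨s * γ, β - q * β - β * q + q * β * q, hβ', ?_, ?_, clR_mul hscl γ, ?_, ?_⟩
  · rw [star_mul, hγ]
    calc γ * star s * (s * γ) = γ * ((star s * s) * γ) := by simp only [mul_assoc]
      _ = γ * γ := by rw [hss, hhγ]
  · have : (β - q * β - β * q + q * β * q) * (s * γ) =
      β * (s * γ) - q * β * (s * γ) - β * (q * (s * γ)) + q * β * (q * (s * γ)) := by
      noncomm_ring
    rw [this, hqx]; abel
  · refine add_mem (sub_mem (sub_mem hβcl (hqcl β)) (clR_mul hβcl q)) ?_
    rw [mul_assoc]; exact hqcl _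
  · intro τ
    have hqq : 0 ≤ q * β * q := by
      have := star_left_conjugate_nonneg hβ q
      rwa [hqs] at this
    have a1 : β ≤ (2 : ℝ) • ((β - q * β - β * q + q * β * q) + q * β * q) := by
      rw [← sub_nonneg]
      have := conj_one_sub hβ (u := q + q) (by rw [star_add, hqs])
      convert this using 1
      rw [two_smul]
      noncomm_ring
    have a2 := τ.pre.D_le_of_le_smul hβ (add_nonneg hβ' hqq) zero_le_two a1
    refine a2.trans ((τ.D_add hβ' hqq).trans ?_)
    refine add_le_add le_rfl ?_
    have a3 : D τ.toFun (q * β * q) ≤ D τ.toFun q := by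
      refine τ.pre.D_le_of_le_smul hqq hq0 (C := ‖β‖ * ‖q‖) (by positivity) ?_
      refine (conj_le_norm hqs (sa_of_nonneg hβ)).trans ?_
      rw [mul_smul]
      exact smul_le_smul_of_nonneg_left (sq_le_norm_smul hq0) (norm_nonneg _)
    have hhh : 0 ≤ h * h := hsq_nonneg hh
    have a4 : D τ.toFun q ≤ D τ.toFun k := by
      rw [hq, τ.pre.D_tr, hss]
      refine τ.pre.D_le_of_le_smul hhh hk (C := ‖h * h‖ * ‖k‖) (by positivity) ?_
      have e : h * h = k * (h * h) * k := by
        rw [← mul_assoc, hkh, mul_assoc, hhk]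
      calc h * h = k * (h * h) * k := e
        _ ≤ ‖h * h‖ • (k * k) := conj_le_norm hks (sa_of_nonneg hhh)
        _ ≤ ‖h * h‖ • (‖k‖ • k) :=
          smul_le_smul_of_nonneg_left (sq_le_norm_smul hk) (norm_nonneg _)
        _ = (‖h * h‖ * ‖k‖) • k := by rw [mul_smul]
    exact a3.trans a4

/-! ### Assembly -/

theorem clR_orth {β y x : R} (hβ : star β = β) (hx : β * x = 0) (hy : y ∈ clR β) :
    star y * x = 0 := by
  have hcl : IsClosed {y : R | star y * x = 0} := isClosed_eq (by fun_prop) (by fun_prop)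
  refine closure_minimal ?_ hcl hy
  rintro _ ⟨r, rfl⟩
  change star (β * r) * x = 0
  rw [star_mul, hβ, mul_assoc, hx, mul_zero]

theorem norm_eq_of_sq {x γ : R} (hγ : star γ = γ) (h : star x * x = γ * γ) : ‖x‖ = ‖γ‖ := by
  have h1 := CStarRing.norm_star_mul_self (x := x)
  have h2 := CStarRing.norm_star_mul_self (x := γ)
  rw [hγ] at h2
  rw [h, h2] at h1
  exact (mul_self_inj (norm_nonneg _) (norm_nonneg _)).1 h1.symm

theorem assembly {S : Set (QuasiTrace R)} {a b : R} (hb : 0 ≤ b) {k h γ : ℕ → R}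
    (hk : ∀ n, 0 ≤ k n) (hh : ∀ n, star (h n) = h n) (hkh : ∀ n, k n * h n = h n)
    (hγ : ∀ n, star (γ n) = γ n) (hhγ : ∀ n, h n * h n * γ n = γ n)
    (hcomp : ∀ n (β : R), 0 ≤ β →
      (∀ τ ∈ S, D τ.toFun b ≤ D τ.toFun β + ∑ i ∈ Finset.range n, D τ.toFun (k i)) →
      CuntzLE (k n) β)
    (hsum : Summable fun n => ‖γ n‖)
    (hlim : Tendsto (fun N => ∑ i ∈ Finset.range N, γ i * γ i) atTop (𝓝 a)) :
    ∃ x : R, star x * x = a ∧ x * star x ∈ her b := by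
  let P : ℕ → R → Prop := fun n β => 0 ≤ β ∧
    ∀ τ ∈ S, D τ.toFun b ≤ D τ.toFun β + ∑ i ∈ Finset.range n, D τ.toFun (k i)
  have hstep : ∀ n (β : {β : R // P n β}), ∃ (x : R) (β' : {β : R // P (n + 1) β}),
      star x * x = γ n * γ n ∧ β'.1 * x = 0 ∧ x ∈ clR β.1 ∧ β'.1 ∈ clR β.1 := by
    rintro n ⟨β, h0, h1⟩
    obtain ⟨x, β', h2, h3, h4, h5, h6, h7⟩ := step_lemma h0 (hk n) (hh n) (hkh n) (hγ n) (hhγ n)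
      (hcomp n β h0 h1)
    refine ⟨x, ⟨β', h2, fun τ hτ => (h1 τ hτ).trans ?_⟩, h3, h4, h5, h6⟩
    rw [Finset.sum_range_succ, add_comm (∑ i ∈ Finset.range n, _), ← add_assoc]
    exact add_le_add (h7 τ) le_rfl
  choose fx fβ h1 h2 h3 h4 using hstep
  let B : ∀ n, {β : R // P n β} := fun n =>
    Nat.rec (motive := fun n => {β : R // P n β}) ⟨b, hb, fun τ _ => by simp⟩
      (fun n β => fβ n β) n
  have hB : ∀ n, B (n + 1) = fβ n (B n) := fun n => rfl
  let x : ℕ → R := fun n => fx n (B n)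
  have hBs : ∀ n, star (B n).1 = (B n).1 := fun n => sa_of_nonneg (B n).2.1
  have hBcl : ∀ n m, n ≤ m → clR (B m).1 ≤ clR (B n).1 := by
    intro n m hnm
    induction m, hnm using Nat.le_induction with
    | base => exact le_rfl
    | succ m _ ih =>
      refine (clR_le ?_).trans ih
      rw [hB]; exact h4 m (B m)
  have hxx : ∀ n, star (x n) * x n = γ n * γ n := fun n => h1 n _
  have horth : ∀ n m, n < m → star (x m) * x n = 0 := by
    intro n m hnm
    refine clR_orth (hBs (n + 1)) (h2 n (B n)) (hBcl (n + 1) m hnm (h3 m (B m)))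
  have horth' : ∀ n m, n ≠ m → star (x m) * x n = 0 := by
    intro n m hnm
    rcases lt_or_gt_of_ne hnm with h | h
    · exact horth n m h
    · have := congrArg star (horth m n h)
      rwa [star_mul, star_star, star_zero] at this
  have hXX : ∀ N, star (∑ i ∈ Finset.range N, x i) * (∑ i ∈ Finset.range N, x i) =
      ∑ i ∈ Finset.range N, γ i * γ i := by
    intro N
    rw [star_sum, Finset.sum_mul_sum]
    refine Finset.sum_congr rfl fun i hi => ?_
    rw [Finset.sum_eq_single i, hxx]
    · intro j _ hj; exact horth' j i hj
    · intro h; exact absurd hi h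
  have hsx : Summable x := by
    refine Summable.of_norm ?_
    simpa only [fun n => norm_eq_of_sq (hγ n) (hxx n)] using hsum
  have htend := hsx.hasSum.tendsto_sum_nat
  refine ⟨∑' i, x i, ?_, ?_⟩
  · have hc : Continuous (fun y : R => star y * y) := by fun_prop
    have := (hc.tendsto _).comp htend
    refine tendsto_nhds_unique (this.congr fun N => hXX N) hlim
  · refine her_of_clR (sa_of_nonneg hb) ?_
    refine (clR_closed b).mem_of_tendsto htend (Eventually.of_forall fun N => ?_)
    refine sum_mem fun i _ => ?_
    exact hBcl 0 i (Nat.zero_le _) (h3 i (B i))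

/-! ### The functions -/

/-- subtracted cut-off -/
def lo (ε : ℕ → ℝ) (c : ℝ) : ℕ → ℝ → ℝ
  | 0 => fun _ => 0
  | n + 1 => cutoff (c * ε n)

/-- band functions -/
def band (ε : ℕ → ℝ) (p c : ℝ) (n : ℕ) (t : ℝ) : ℝ := cutoff (ε n / p) t - lo ε c n t

theorem lo_cont (ε : ℕ → ℝ) (c : ℝ) (n : ℕ) : Continuous (lo ε c n) := by
  cases n with
  | zero => exact continuous_const
  | succ n => exact cutoff_cont _

theorem band_cont (ε : ℕ → ℝ) (p c : ℝ) (n : ℕ) : Continuous (band ε p c n) :=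
  (cutoff_cont _).sub (lo_cont _ _ _)

theorem band_zero (ε : ℕ → ℝ) (p c : ℝ) (n : ℕ) : band ε p c n 0 = 0 := by
  cases n <;> simp [band, lo, cutoff_zero]

section Bands
variable {ε : ℕ → ℝ} (hε : ∀ n, 0 < ε n) (hd : ∀ n, ε (n + 1) ≤ ε n / 64)

theorem band_nonneg (hε : ∀ n, 0 < ε n) (hd : ∀ n, ε (n + 1) ≤ ε n / 64) {p c : ℝ} (hp : 1 ≤ p)
    (hc : 1 ≤ c) (n : ℕ) {t : ℝ} (ht : 0 ≤ t) : 0 ≤ band ε p c n t := by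
  cases n with
  | zero => simp [band, lo, cutoff_nonneg]
  | succ n =>
    have h0 := hε n
    have h1 := hε (n + 1)
    have : ε (n + 1) / p ≤ c * ε n := by
      have : ε (n + 1) / p ≤ ε (n + 1) := div_le_self h1.le hp
      nlinarith [hd n]
    exact sub_nonneg.2 (cutoff_anti (by positivity) this ht)

theorem band_mul1 (hε : ∀ n, 0 < ε n) (hd : ∀ n, ε (n + 1) ≤ ε n / 64) (n : ℕ) (t : ℝ) :
    band ε 4 8 n t * band ε 2 4 n t = band ε 2 4 n t := by
  have h1 := hε n
  have a1 : cutoff (ε n / 4) t * cutoff (ε n / 2) t = cutoff (ε n / 2) t :=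
    cutoff_mul (by positivity) (by linarith)
  cases n with
  | zero => simpa [band, lo] using a1
  | succ n =>
    have h0 := hε n
    have hdn := hd n
    have a2 : cutoff (ε (n + 1) / 4) t * cutoff (4 * ε n) t = cutoff (4 * ε n) t :=
      cutoff_mul (by positivity) (by linarith)
    have a3 : cutoff (ε (n + 1) / 2) t * cutoff (8 * ε n) t = cutoff (8 * ε n) t :=
      cutoff_mul (by positivity) (by linarith)
    have a4 : cutoff (4 * ε n) t * cutoff (8 * ε n) t = cutoff (8 * ε n) t :=
      cutoff_mul (by positivity) (by linarith)
    simp only [band, lo]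
    linear_combination a1 - a2 - a3 + a4

theorem band_mul2 (hε : ∀ n, 0 < ε n) (hd : ∀ n, ε (n + 1) ≤ ε n / 64) (n : ℕ) (t : ℝ) :
    band ε 2 4 n t * band ε 1 1 n t = band ε 1 1 n t := by
  have h1 := hε n
  have a1 : cutoff (ε n / 2) t * cutoff (ε n / 1) t = cutoff (ε n / 1) t :=
    cutoff_mul (by positivity) (by linarith)
  cases n with
  | zero => simpa [band, lo] using a1
  | succ n =>
    have h0 := hε n
    have hdn := hd n
    have a2 : cutoff (ε (n + 1) / 2) t * cutoff (1 * ε n) t = cutoff (1 * ε n) t :=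
      cutoff_mul (by positivity) (by linarith)
    have a3 : cutoff (ε (n + 1) / 1) t * cutoff (4 * ε n) t = cutoff (4 * ε n) t :=
      cutoff_mul (by positivity) (by linarith)
    have a4 : cutoff (1 * ε n) t * cutoff (4 * ε n) t = cutoff (4 * ε n) t :=
      cutoff_mul (by positivity) (by linarith)
    simp only [band, lo]
    linear_combination a1 - a2 - a3 + a4

/-- root of the band -/
def rt (ε : ℕ → ℝ) (n : ℕ) (t : ℝ) : ℝ := √(t * band ε 1 1 n t)

theorem rt_cont (ε : ℕ → ℝ) (n : ℕ) : Continuous (rt ε n) := by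
  have := band_cont ε 1 1 n
  unfold rt; fun_prop

theorem rt_zero (ε : ℕ → ℝ) (n : ℕ) : rt ε n 0 = 0 := by simp [rt]

theorem rt_mul (hε : ∀ n, 0 < ε n) (hd : ∀ n, ε (n + 1) ≤ ε n / 64) (n : ℕ) (t : ℝ) :
    band ε 2 4 n t * band ε 2 4 n t * rt ε n t = rt ε n t := by
  by_cases h : band ε 1 1 n t = 0
  · simp [rt, h]
  · have : band ε 2 4 n t = 1 := mul_right_cancel₀ h (by rw [band_mul2 hε hd, one_mul])
    rw [this]; ring

theorem rt_sum (hε : ∀ n, 0 < ε n) (hd : ∀ n, ε (n + 1) ≤ ε n / 64) {a : R} (ha : 0 ≤ a) (N : ℕ) :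
    ∑ i ∈ Finset.range (N + 1), cfcₙ (rt ε i) a * cfcₙ (rt ε i) a =
      cfcₙ (fun t => cutoff (ε N) t * t) a := by
  have h1 : ∀ i, cfcₙ (rt ε i) a * cfcₙ (rt ε i) a = cfcₙ (fun t => t * band ε 1 1 i t) a := by
    intro i
    rw [c_mul (rt_cont _ _) (rt_zero _ _) (rt_cont _ _) (rt_zero _ _)]
    exact c_congr ha fun t ht =>
      Real.mul_self_sqrt (mul_nonneg ht (band_nonneg hε hd le_rfl le_rfl i ht))
  induction N with
  | zero =>
    rw [Finset.sum_range_one, h1]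
    congr 1; ext t
    simp [band, lo, mul_comm]
  | succ N ih =>
    have hb := band_cont ε 1 1 (N + 1)
    have hcc := cutoff_cont (ε N)
    rw [Finset.sum_range_succ, ih, h1, c_add (f := fun t => cutoff (ε N) t * t) (by fun_prop)
      (by simp) (g := fun t => t * band ε 1 1 (N + 1) t) (by fun_prop) (by simp)]
    congr 1; ext t
    simp only [band, lo, one_mul, div_one]
    ring

theorem rt_lim (hε : ∀ n, 0 < ε n) (hd : ∀ n, ε (n + 1) ≤ ε n / 64) {a : R} (ha : 0 ≤ a)
    (h0 : Tendsto ε atTop (𝓝 0)) :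
    Tendsto (fun N => ∑ i ∈ Finset.range N, cfcₙ (rt ε i) a * cfcₙ (rt ε i) a) atTop (𝓝 a) := by
  rw [← tendsto_add_atTop_iff_nat 1]
  simp only [rt_sum hε hd ha]
  rw [tendsto_iff_norm_sub_tendsto_zero]
  refine squeeze_zero (fun _ => norm_nonneg _) (fun N => ?_) h0
  have hcc := cutoff_cont (ε N)
  conv_lhs => enter [1, 2]; rw [← c_id ha]
  rw [c_sub (f := fun t => cutoff (ε N) t * t) (by fun_prop) (by simp) (by fun_prop) rfl]
  refine c_norm_le ha fun t ht => ?_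
  rcases le_total t (ε N) with h | h
  · rw [abs_sub_comm, abs_of_nonneg (by nlinarith [cutoff_le_one (ε N) t])]
    nlinarith [cutoff_nonneg (ε N) t]
  · rw [cutoff_eq_one (hε N) h]; simp [(hε N).le]

theorem rt_norm (hε : ∀ n, 0 < ε n) (hd : ∀ n, ε (n + 1) ≤ ε n / 64) {a : R} (ha : 0 ≤ a) (n : ℕ) :
    ‖cfcₙ (rt ε (n + 1)) a‖ ≤ √(ε n) := by
  refine c_norm_le ha fun t ht => ?_
  rw [rt, abs_of_nonneg (Real.sqrt_nonneg _)]
  refine Real.sqrt_le_sqrt ?_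
  have h1 := hε n
  have h2 := hε (n + 1)
  have h3 := hd n
  simp only [band, lo, div_one, one_mul]
  rcases le_total t (ε n) with h | h
  · have b1 := cutoff_nonneg (ε n) t
    have b2 := cutoff_le_one (ε (n + 1)) t
    nlinarith
  · rw [cutoff_eq_one h1 h, cutoff_eq_one h2 (by linarith)]; simp [h1.le]

theorem band_comp {a : R} (ha : 0 ≤ a) (ε : ℕ → ℝ) (n : ℕ) (μ : ℝ) :
    fEps μ (cfcₙ (band ε 4 8 n) a) = cfcₙ (fun t => cutoff μ (band ε 4 8 n t)) a :=
  (cfcₙ_comp' (cutoff μ) (band ε 4 8 n) a (cutoff_cont _).continuousOn (cutoff_zero _)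
      (band_cont _ _ _ _).continuousOn (band_zero _ _ _ _) (IsSelfAdjoint.of_nonneg ha)).symm

theorem D_band0 (hε : ∀ n, 0 < ε n) {a : R} (ha : 0 ≤ a) (τ : QuasiTrace R) :
    D τ.toFun (cfcₙ (band ε 4 8 0) a) ≤ D τ.toFun a := by
  refine iSup_le fun m => ?_
  have h1 := hε 0
  refine le_trans ?_ (τ.pre.le_D ha (ε := ε 0 / 8) (by positivity))
  rw [band_comp ha]
  refine τ.pre.mono_fun ha ((cutoff_cont _).comp (band_cont _ _ _ _))
    (by simp [band_zero, cutoff_zero]) (cutoff_cont _) (cutoff_zero _)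
    (fun t _ => cutoff_nonneg _ _) fun t ht => ?_
  rcases le_total t (ε 0 / 8) with h | h
  · have : band ε 4 8 0 t = 0 := by
      simp only [band, lo]; rw [cutoff_eq_zero (by positivity) (by linarith)]; simp
    rw [this, cutoff_zero]; exact cutoff_nonneg _ _
  · rw [cutoff_eq_one (by positivity) h]; exact cutoff_le_one _ _

theorem D_band (hε : ∀ n, 0 < ε n) (hd : ∀ n, ε (n + 1) ≤ ε n / 64) {a : R} (ha : 0 ≤ a)
    (τ : QuasiTrace R) (n : ℕ) :
    D τ.toFun (cfcₙ (band ε 4 8 (n + 1)) a) + τ.toFun (fEps (16 * ε n) a) ≤ D τ.toFun a := by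
  have h1 := hε n
  have h2 := hε (n + 1)
  have h3 := hd n
  rw [D, ENNReal.iSup_add]
  refine iSup_le fun m => ?_
  refine le_trans ?_ (τ.pre.le_D ha (ε := ε (n + 1) / 8) (by positivity))
  have hb := band_cont ε 4 8 (n + 1)
  have hc1 := cutoff_cont (1 / ((m : ℝ) + 1))
  have hc2 := cutoff_cont (16 * ε n)
  have z1 : cutoff (1 / ((m : ℝ) + 1)) (band ε 4 8 (n + 1) 0) = 0 := by
    rw [band_zero, cutoff_zero]
  rw [band_comp ha, fEps, ← τ.map_add_of_commute _ _ (c_nonneg ha fun t _ => cutoff_nonneg _ _)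
    (c_nonneg ha fun t _ => cutoff_nonneg _ _) (c_comm _ _ _),
    c_add (f := fun t => cutoff (1 / ((m : ℝ) + 1)) (band ε 4 8 (n + 1) t)) (by fun_prop) z1
      hc2 (cutoff_zero _)]
  refine τ.pre.mono_fun ha (by fun_prop) (by rw [z1, cutoff_zero, add_zero])
    (cutoff_cont _) (cutoff_zero _)
    (fun t _ => add_nonneg (cutoff_nonneg _ _) (cutoff_nonneg _ _)) fun t ht => ?_
  rcases le_total t (ε (n + 1) / 8) with h | h
  · have : band ε 4 8 (n + 1) t = 0 := by
      simp only [band, lo]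
      rw [cutoff_eq_zero (by positivity) (by linarith), cutoff_eq_zero (by positivity)
        (by linarith), sub_zero]
    rw [this, cutoff_zero, cutoff_eq_zero (by positivity) (by linarith), add_zero]
    exact cutoff_nonneg _ _
  · rw [cutoff_eq_one (ε := ε (n + 1) / 8) (by positivity) h]
    rcases le_total t (8 * ε n) with h' | h'
    · rw [cutoff_eq_zero (ε := 16 * ε n) (by positivity) (by linarith), add_zero]
      exact cutoff_le_one _ _
    · have : band ε 4 8 (n + 1) t = 0 := by
        simp only [band, lo]
        rw [cutoff_eq_one (by positivity) (by linarith), cutoff_eq_one (by positivity)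
          (by linarith), sub_self]
      rw [this, cutoff_zero, zero_add]
      exact cutoff_le_one _ _

end Bands

theorem exists_eps (c : ℕ → ℝ) (hc : ∀ n, 0 < c n) : ∃ ε : ℕ → ℝ, (∀ n, 0 < ε n) ∧
    (∀ n, ε (n + 1) ≤ ε n / 64) ∧ (∀ n, ε n ≤ c n) := by
  let ε : ℕ → ℝ := fun n => Nat.rec (c 0) (fun n e => min (c (n + 1)) (e / 64)) n
  have hs : ∀ n, ε (n + 1) = min (c (n + 1)) (ε n / 64) := fun n => rfl
  have hp : ∀ n, 0 < ε n := by
    intro n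
    induction n with
    | zero => exact hc 0
    | succ n ih => rw [hs]; exact lt_min (hc _) (by positivity)
  refine ⟨ε, hp, fun n => by rw [hs]; exact min_le_right _ _, fun n => ?_⟩
  cases n with
  | zero => exact le_rfl
  | succ n => rw [hs]; exact min_le_left _ _

theorem eps_geom {ε : ℕ → ℝ} (hd : ∀ n, ε (n + 1) ≤ ε n / 64) (n : ℕ) :
    ε n ≤ ε 0 * (1 / 64) ^ n := by
  induction n with
  | zero => simp
  | succ n ih => rw [pow_succ]; linarith [hd n]

theorem eps_tendsto {ε : ℕ → ℝ} (hε : ∀ n, 0 < ε n) (hd : ∀ n, ε (n + 1) ≤ ε n / 64) :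
    Tendsto ε atTop (𝓝 0) := by
  refine squeeze_zero (fun n => (hε n).le) (eps_geom hd) ?_
  have := (tendsto_pow_atTop_nhds_zero_of_lt_one (r := (1 / 64 : ℝ)) (by norm_num)
    (by norm_num)).const_mul (ε 0)
  rwa [mul_zero] at this

theorem eps_summable {ε : ℕ → ℝ} (hε : ∀ n, 0 < ε n) (hd : ∀ n, ε (n + 1) ≤ ε n / 64) :
    Summable fun n => √(ε n) := by
  refine Summable.of_nonneg_of_le (fun n => Real.sqrt_nonneg _)
    (f := fun n => √(ε 0) * (1 / 8) ^ n) (fun n => ?_) ?_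
  · refine (Real.sqrt_le_sqrt (eps_geom hd n)).trans_eq ?_
    rw [Real.sqrt_mul (hε 0).le]
    congr 1
    rw [show (1 / 64 : ℝ) ^ n = ((1 / 8) ^ n) ^ 2 by rw [← pow_mul, mul_comm, pow_mul]; norm_num]
    exact Real.sqrt_sq (by positivity)
  · exact (summable_geometric_of_lt_one (by norm_num) (by norm_num)).mul_left _

theorem main_aux (SB : Stabilization A W) (hsimple : IsSimpleCStar A)
    (hsc : StrictComparison W) (a b : W) (ha : 0 ≤ a) (hb : 0 ≤ b)
    (hlt : ∀ τ : QuasiTrace W, ¬ τ.IsZero → dTau τ a < dTau τ b ∧ dTau τ b < ∞)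
    (hω : OmegaZero SB a) :
    ∃ x : W, star x * x = a ∧ x * star x ∈ her b := by
  obtain ⟨e, he0, hene, heped, hscale, hfin, ⟨a₁, ha₁, δ, hδ, hone⟩, hnz⟩ := setup SB hsimple
  set S := QTSetHer (SB.emb 0 0 e) with hS
  have hωS : omegaOn S a = 0 := omegaOn_mono subset_closure (hω e he0 hene heped)
  obtain ⟨η, hη, hgap⟩ := uniform_gap hfin ha₁ hδ hone ha hb (fun τ hτ => (hlt τ hτ).1) hωS
  obtain ⟨η', hη'0, hη'⟩ := ENNReal.exists_pos_sum_of_countable hη ℕ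
  choose k hk using fun n => omega_small hωS (ε := (η' n : ℝ≥0∞))
    (by exact_mod_cast (hη'0 n).ne')
  obtain ⟨ε, hε, hd, hεc⟩ := exists_eps (fun n => 1 / (16 * ((k n : ℝ) + 1)))
    (fun n => by positivity)
  have hDk : ∀ τ ∈ S, ∀ n, D τ.toFun (cfcₙ (band ε 4 8 (n + 1)) a) ≤ η' n := by
    intro τ hτ n
    have hfinb : D τ.toFun b < ∞ := (hlt τ (hnz τ hτ)).2
    have hfina : D τ.toFun a < ∞ := (hlt τ (hnz τ hτ)).1.trans hfinb
    have h1 := D_band hε hd ha τ n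
    have h2 : τ.toFun (fEps (1 / ((k n : ℝ) + 1)) a) ≤ τ.toFun (fEps (16 * ε n) a) := by
      refine τ.mono (fEps_nonneg ha _) (fEps_anti ha (by have := hε n; positivity) ?_)
      have := hεc n
      calc 16 * ε n ≤ 16 * (1 / (16 * ((k n : ℝ) + 1))) := by gcongr
        _ = 1 / ((k n : ℝ) + 1) := by field_simp
    have h3 : τ.toFun (fEps (16 * ε n) a) ≠ ∞ :=
      ((le_add_self.trans h1).trans_lt hfina).ne
    have h4 := h1.trans ((hk n τ hτ).trans (add_le_add h2 le_rfl))
    rw [add_comm] at h4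
    exact (ENNReal.add_le_add_iff_left h3).1 h4
  refine assembly (S := S) hb (k := fun n => cfcₙ (band ε 4 8 n) a)
    (h := fun n => cfcₙ (band ε 2 4 n) a) (γ := fun n => cfcₙ (rt ε n) a)
    (fun n => c_nonneg ha fun t ht => band_nonneg hε hd (by norm_num) (by norm_num) n ht)
    (fun n => c_star _ _) (fun n => ?_) (fun n => c_star _ _) (fun n => ?_) ?_ ?_
    (rt_lim hε hd ha (eps_tendsto hε hd))
  · rw [c_mul (band_cont _ _ _ _) (band_zero _ _ _ _) (band_cont _ _ _ _) (band_zero _ _ _ _)]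
    congr 1; ext t; exact band_mul1 hε hd n t
  · have hbc := band_cont ε 2 4 n
    rw [c_mul (band_cont _ _ _ _) (band_zero _ _ _ _) (band_cont _ _ _ _) (band_zero _ _ _ _),
      c_mul (f := fun t => band ε 2 4 n t * band ε 2 4 n t) (by fun_prop) (by simp [band_zero])
        (rt_cont _ _) (rt_zero _ _)]
    congr 1; ext t; exact rt_mul hε hd n t
  · intro n β hβ hinv
    have key : ∀ τ ∈ S, D τ.toFun (cfcₙ (band ε 4 8 n) a) < D τ.toFun β := by
      intro τ hτ
      have hfinb : D τ.toFun b < ∞ := (hlt τ (hnz τ hτ)).2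
      have hfina : D τ.toFun a < ∞ := (hlt τ (hnz τ hτ)).1.trans hfinb
      have s1 : ∑ i ∈ Finset.range (n + 1), D τ.toFun (cfcₙ (band ε 4 8 i) a) <
          D τ.toFun a + η := by
        rw [Finset.sum_range_succ']
        have s2 : ∑ i ∈ Finset.range n, D τ.toFun (cfcₙ (band ε 4 8 (i + 1)) a) < η := by
          refine lt_of_le_of_lt ?_ hη'
          refine (Finset.sum_le_sum fun i _ => hDk τ hτ i).trans ?_
          exact ENNReal.sum_le_tsum _
        rw [add_comm]
        exact ENNReal.add_lt_add_of_le_of_lt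
          ((D_band0 hε ha τ).trans_lt hfina).ne (D_band0 hε ha τ) s2
      have s3 := s1.trans_le ((hgap τ hτ).trans (hinv τ hτ))
      rw [Finset.sum_range_succ, add_comm] at s3
      exact lt_of_add_lt_add_right s3
    refine hsc _ _ (c_nonneg ha fun t ht => band_nonneg hε hd (by norm_num) (by norm_num) n ht)
      hβ fun τ hτ => ?_
    obtain ⟨c, hc0, hc, τ', hτ', hsm⟩ := hscale τ hτ
    have := key τ' hτ'
    rw [D_scale hsm, D_scale hsm] at this
    exact lt_of_mul_lt_mul_left' this
  · rw [← summable_nat_add_iff 1]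
    exact Summable.of_nonneg_of_le (fun n => norm_nonneg _) (fun n => rt_norm hε hd ha n)
      (eps_summable hε hd)

end Helpers

/-- **Theorem.** Let `A` be a σ-unital simple C*-algebra with strict comparison which is not
purely infinite.  If `a, b ∈ (A ⊗ K)₊` satisfy `d_τ(a) < d_τ(b) < ∞` for all nonzero
`τ ∈ QT̃(A)` and `ω(a) = 0`, then `a ≾̃ b`: there is `x ∈ A ⊗ K` with `x*x = a` and
`xx* ∈ Her(b)`. -/
theorem comparison_of_continuous_dimension
    (SB : Stabilization A W)
    (hσ : SigmaUnital A) (hsimple : IsSimpleCStar A)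
    (hsc : StrictComparison W) (hnpi : ¬ PurelyInfinite A)
    (a b : W) (ha : 0 ≤ a) (hb : 0 ≤ b)
    (hlt : ∀ τ : QuasiTrace W, ¬ τ.IsZero → dTau τ a < dTau τ b ∧ dTau τ b < ∞)
    (hω : OmegaZero SB a) :
    ∃ x : W, star x * x = a ∧ x * star x ∈ her b := by
  exact main_aux SB hsimple hsc a b ha hb hlt hω

end Paper
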